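/- arXiv:1811.03747 — 3 statements merged into one kernel-verified Lean document; each statement's English description precedes it below -/
import Mathlib

section
/- (Infinite induced oriented graph removal lemma.) Let F be a (possibly infinite) set of oriented graphs. For every ε_R > 0 there exist n₀ and δ > 0 such that for every oriented graph G of order n ≥ n₀, if G contains at most δ·n^{|V(H)|} induced copies of H for each H ∈ F, then there exists an oriented graph G' on the same n vertices such that G' contains no induced copy of any H ∈ F and G' can be obtained from G by adding, removing, and/or reorienting the arcs of at most ε_R n² pairs of vertices. -/
open scoped Classical

/-- An oriented graph: the arc relation has no loops and no 2-cycles. -/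
def IsOriented {V : Type*} (A : V → V → Prop) : Prop :=
  ∀ a b : V, A a b → ¬ A b a

/-- `T⃗₃`-freeness: no three vertices span the arcs a→b, b→c, a→c. -/
def T3Free {V : Type*} (A : V → V → Prop) : Prop :=
  ∀ a b c : V, ¬ (A a b ∧ A b c ∧ A a c)

/-- `S` is the vertex set of an induced copy of the directed path `P⃗ₖ` in the
oriented graph with arc relation `A`. -/
def IsInducedPath {V : Type*} (A : V → V → Prop) (k : ℕ) (S : Finset V) : Prop :=
  ∃ f : Fin k → V, Function.Injective f ∧ (∀ v : V, v ∈ S ↔ ∃ i, f i = v) ∧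
    ∀ i j : Fin k, A (f i) (f j) ↔ (j : ℕ) = (i : ℕ) + 1

/-- The number of induced copies of `P⃗ₖ`. -/
noncomputable def numPaths {V : Type*} [Fintype V] [DecidableEq V]
    (A : V → V → Prop) (k : ℕ) : ℕ :=
  (Finset.univ.filter fun S : Finset V => IsInducedPath A k S).card

/-- The number of induced copies of `P⃗ₖ` containing all vertices of `T`. -/
noncomputable def numPathsThrough {V : Type*} [Fintype V] [DecidableEq V]
    (A : V → V → Prop) (k : ℕ) (T : Finset V) : ℕ :=
  (Finset.univ.filter fun S : Finset V => IsInducedPath A k S ∧ T ⊆ S).card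

/-- The density of induced copies of `P⃗ₖ`. -/
noncomputable def pathDensity {V : Type*} [Fintype V] [DecidableEq V]
    (A : V → V → Prop) (k : ℕ) : ℝ :=
  (numPaths A k : ℝ) / ((Fintype.card V).choose k : ℝ)

/-- The maximum density of induced copies of `P⃗ₖ` over all `T⃗₃`-free oriented
graphs on `n` vertices. -/
noncomputable def maxDensityT3 (k n : ℕ) : ℝ :=
  sSup {d : ℝ | ∃ A : Fin n → Fin n → Prop, IsOriented A ∧ T3Free A ∧ d = pathDensity A k}

/-- The maximum density of induced copies of `P⃗ₖ` over all oriented graphs on `n`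
vertices. -/
noncomputable def maxDensityAll (k n : ℕ) : ℝ :=
  sSup {d : ℝ | ∃ A : Fin n → Fin n → Prop, IsOriented A ∧ d = pathDensity A k}

/-- `S` is the vertex set of an induced copy of the oriented graph `H` in the
oriented graph with arc relation `A`. -/
def IsInducedCopy {V W : Type*} (H : W → W → Prop) (A : V → V → Prop) (S : Finset V) : Prop :=
  ∃ f : W → V, Function.Injective f ∧ (∀ v : V, v ∈ S ↔ ∃ w, f w = v) ∧
    ∀ a b : W, A (f a) (f b) ↔ H a b

/-- The number of induced copies of `H` in `A`. -/
noncomputable def numCopies {V W : Type*} [Fintype V] [DecidableEq V]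
    (H : W → W → Prop) (A : V → V → Prop) : ℕ :=
  (Finset.univ.filter fun S : Finset V => IsInducedCopy H A S).card

/-- The number of (unordered) pairs of vertices on which the two oriented graphs `A`
and `B` differ (an arc must be added, removed, or reoriented). -/
noncomputable def pairDiff {V : Type*} [Fintype V] [LinearOrder V]
    (A B : V → V → Prop) : ℕ :=
  (Finset.univ.filter fun p : V × V => p.1 < p.2 ∧
    ¬ ((A p.1 p.2 ↔ B p.1 p.2) ∧ (A p.2 p.1 ↔ B p.2 p.1))).card

/-- `A` is a blow-up of the directed 5-cycle with parts given by the fibers of `g`. -/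
def IsBlowupC5 {V : Type*} (A : V → V → Prop) (g : V → Fin 5) : Prop :=
  ∀ u v : V, A u v ↔ g v = g u + 1

/-- The size of the part of vertices mapped to `i`. -/
noncomputable def partSize {V : Type*} [Fintype V] {m : ℕ} (g : V → Fin m) (i : Fin m) : ℕ :=
  (Finset.univ.filter fun v : V => g v = i).card

/-- `A` is a balanced blow-up of the directed 5-cycle, i.e. isomorphic to `C⃗₅(n)`. -/
def IsBalancedBlowupC5 {V : Type*} [Fintype V] (A : V → V → Prop) : Prop :=
  ∃ g : V → Fin 5, IsBlowupC5 A g ∧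
    ∀ i j : Fin 5, (partSize g i : ℤ) - (partSize g j : ℤ) ≤ 1

/-!
If the theorem failed for some `ε`, there would be oriented graphs of order tending to infinity in
which every forbidden density tends to `0`, but which are `ε`-far from being free of forbidden
subgraphs. View each of them as a colouring of the ordered pairs of vertices. Weak regularity labels
every vertex by an infinite word, truncations of which define finer and finer regular partitions.
The words form a compact space, so along an ultrafilter the labelled colourings converge to a
limit object: a probability measure `μ` on words and a distribution `κ (x, y)` on colours for each
pair of words. By the counting lemma every forbidden pattern has density `0` in the limit.

To edit one of the graphs, replace each vertex independently by a `μ`-random word with the same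
truncation, and change the colour of `(u, v)` only where `κ` gives it probability zero, to a colour
of positive probability. A surviving forbidden pattern would have positive probability at the
sampled words; almost surely this happens for none of the countably many finite patterns. By
martingale convergence, the expected number of changed pairs is at most `ε n ^ 2` once the
truncation is fine enough.
-/

namespace InducedRemoval

open Finset Function Filter Topology MeasureTheory ProbabilityTheory
open scoped BigOperators

/-- The indicator function of the fibre `l ⁻¹' {b}`. -/
noncomputable def fiberIndicator {Ω β : Type*} (l : Ω → β) (b : β) (p : Ω) : ℝ :=
  if l p = b then 1 else 0

lemma fiberIndicator_mem_Icc {Ω β : Type*} (l : Ω → β) (b : β) (p : Ω) :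
    fiberIndicator l b p ∈ Set.Icc 0 1 := by
  unfold fiberIndicator
  split_ifs <;> simp

section FiberAverage

variable {Ω β γ : Type*} [Fintype Ω]

/-- The conditional expectation of `f` given the label `l`, under the uniform measure on `Ω`. -/
noncomputable def fiberAvg (l : Ω → β) (f : Ω → ℝ) (p : Ω) : ℝ :=
  𝔼 q with l q = l p, f q

lemma fiber_nonempty (l : Ω → β) (p : Ω) : (univ.filter fun q ↦ l q = l p).Nonempty :=
  ⟨p, by simp⟩

lemma fiberAvg_factorsThrough (l : Ω → β) (f : Ω → ℝ) : (fiberAvg l f).FactorsThrough l := by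
  intro p q hpq
  simp only [fiberAvg, hpq]

lemma fiberAvg_mem_Icc (l : Ω → β) {f : Ω → ℝ} (hf : ∀ p, f p ∈ Set.Icc 0 1) (p : Ω) :
    fiberAvg l f p ∈ Set.Icc 0 1 :=
  ⟨expect_nonneg fun q _ ↦ (hf q).1, expect_le (fiber_nonempty l p) fun q _ ↦ (hf q).2⟩

lemma expect_fiberAvg_mul {l : Ω → β} (f : Ω → ℝ) {g : Ω → ℝ} (hg : g.FactorsThrough l) :
    𝔼 p, fiberAvg l f p * g p = 𝔼 p, f p * g p := by
  simp only [expect_univ]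
  congr 1
  rw [← sum_fiberwise_of_maps_to (t := univ.image l) (g := l) (by simp),
    ← sum_fiberwise_of_maps_to (t := univ.image l) (g := l) (by simp)]
  refine sum_congr rfl fun b hb ↦ ?_
  obtain ⟨p₀, -, rfl⟩ := mem_image.1 hb
  have hconst : ∀ p ∈ univ.filter (fun p ↦ l p = l p₀), g p = g p₀ := fun p hp ↦
    hg (mem_filter.1 hp).2
  have havg : ∀ p ∈ univ.filter (fun p ↦ l p = l p₀), fiberAvg l f p = fiberAvg l f p₀ :=
    fun p hp ↦ fiberAvg_factorsThrough l f (mem_filter.1 hp).2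
  rw [sum_congr rfl fun p hp ↦ by rw [havg p hp, hconst p hp], sum_const, ← smul_mul_assoc,
    fiberAvg, card_smul_expect, sum_mul]
  exact sum_congr rfl fun p hp ↦ by rw [hconst p hp]

lemma expect_sq_fiberAvg_sub {l : Ω → β} {l' : Ω → γ} (hl : l.FactorsThrough l') (f : Ω → ℝ) :
    𝔼 p, (fiberAvg l' f p - fiberAvg l f p) ^ 2 =
      𝔼 p, fiberAvg l' f p ^ 2 - 𝔼 p, fiberAvg l f p ^ 2 := by
  have hcoarse := fiberAvg_factorsThrough l f
  have horth : 𝔼 p, fiberAvg l' f p * fiberAvg l f p = 𝔼 p, fiberAvg l f p * fiberAvg l f p := by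
    rw [expect_fiberAvg_mul f fun p q h ↦ hcoarse (hl h), expect_fiberAvg_mul f hcoarse]
  calc 𝔼 p, (fiberAvg l' f p - fiberAvg l f p) ^ 2
    _ = 𝔼 p, (fiberAvg l' f p ^ 2 - 2 * (fiberAvg l' f p * fiberAvg l f p)
          + fiberAvg l f p * fiberAvg l f p) := by congr! 1; ring
    _ = 𝔼 p, fiberAvg l' f p ^ 2 - 𝔼 p, fiberAvg l f p * fiberAvg l f p := by
      rw [expect_add_distrib, expect_sub_distrib, ← mul_expect, horth]; ring
    _ = _ := by simp only [sq]

lemma sq_expect_sub_fiberAvg_mul_le {l : Ω → β} {l' : Ω → γ} (hl : l.FactorsThrough l')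
    (f : Ω → ℝ) {g : Ω → ℝ} (hg : g.FactorsThrough l') (hg1 : ∀ p, g p ^ 2 ≤ 1) :
    (𝔼 p, (f p - fiberAvg l f p) * g p) ^ 2 ≤
      𝔼 p, fiberAvg l' f p ^ 2 - 𝔼 p, fiberAvg l f p ^ 2 := by
  have hfine : 𝔼 p, (f p - fiberAvg l f p) * g p =
      𝔼 p, (fiberAvg l' f p - fiberAvg l f p) * g p := by
    simp only [sub_mul, expect_sub_distrib, expect_fiberAvg_mul f hg]
  have hg_le : 𝔼 p, g p ^ 2 ≤ 1 := by
    cases isEmpty_or_nonempty Ω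
    · simp
    · exact expect_le univ_nonempty fun p _ ↦ hg1 p
  rw [hfine, ← expect_sq_fiberAvg_sub hl]
  calc (𝔼 p, (fiberAvg l' f p - fiberAvg l f p) * g p) ^ 2
    _ ≤ (𝔼 p, (fiberAvg l' f p - fiberAvg l f p) ^ 2) * 𝔼 p, g p ^ 2 :=
      expect_mul_sq_le_sq_mul_sq _ _ _
    _ ≤ (𝔼 p, (fiberAvg l' f p - fiberAvg l f p) ^ 2) * 1 := by
      gcongr
    _ = _ := mul_one _

lemma expect_abs_fiberAvg_sub [Fintype β] (l : Ω → β) (f : Ω → ℝ) (w : β → ℝ) :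
    𝔼 p, |fiberAvg l f p - w (l p)| =
      ∑ b, |𝔼 p, fiberIndicator l b p * f p - w b * 𝔼 p, fiberIndicator l b p| := by
  have hfiber : ∀ b, (∑ p with l p = b, |fiberAvg l f p - w (l p)|) =
      |(∑ p with l p = b, f p) - w b * #{p | l p = b}| := by
    intro b
    rcases (univ.filter fun p ↦ l p = b).eq_empty_or_nonempty with hb | ⟨p₀, hp₀⟩
    · simp [hb]
    obtain rfl : l p₀ = b := (mem_filter.1 hp₀).2
    rw [sum_congr rfl fun p hp ↦ by
        rw [fiberAvg_factorsThrough l f (mem_filter.1 hp).2, (mem_filter.1 hp).2],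
      sum_const, ← abs_nsmul, smul_sub, fiberAvg, card_smul_expect, nsmul_eq_mul, mul_comm (w _)]
  simp only [fiberIndicator, ite_mul, one_mul, zero_mul, Fintype.expect_eq_sum_div_card,
    ← sum_filter, sum_const, nsmul_one,
    ← mul_div_assoc, ← sub_div, abs_div, Nat.abs_cast, ← sum_div, ← hfiber]
  rw [← sum_fiberwise univ l]

end FiberAverage

section CutNorm

variable {V : Type*} [Fintype V]

/-- The normalised cut norm `max_{S, T} |𝔼_{(u, v)} g (u, v) 1_S(u) 1_T(v)|` of a kernel `g`. -/
noncomputable def cutNorm (g : V × V → ℝ) : ℝ :=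
  ⨆ R : Finset V × Finset V, |𝔼 p, if p ∈ R.1 ×ˢ R.2 then g p else 0|

lemma abs_expect_rectangle_le_cutNorm (g : V × V → ℝ) (S T : Finset V) :
    |𝔼 p, if p ∈ S ×ˢ T then g p else 0| ≤ cutNorm g :=
  le_ciSup (f := fun R : Finset V × Finset V ↦ |𝔼 p, if p ∈ R.1 ×ˢ R.2 then g p else 0|)
    (Set.finite_range _).bddAbove (S, T)

lemma exists_abs_expect_rectangle_eq_cutNorm (g : V × V → ℝ) :
    ∃ S T : Finset V, |𝔼 p, if p ∈ S ×ˢ T then g p else 0| = cutNorm g :=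
  let ⟨R, hR⟩ := exists_eq_ciSup_of_finite
    (f := fun R : Finset V × Finset V ↦ |𝔼 p, if p ∈ R.1 ×ˢ R.2 then g p else 0|)
  ⟨R.1, R.2, hR⟩

lemma cutNorm_neg (g : V × V → ℝ) : cutNorm (-g) = cutNorm g := by
  refine iSup_congr fun R ↦ ?_
  rw [← abs_neg, ← expect_neg_distrib]
  simp only [Pi.neg_apply, neg_ite, neg_neg, neg_zero]

lemma cutNorm_add_le (f g : V × V → ℝ) : cutNorm (f + g) ≤ cutNorm f + cutNorm g := by
  obtain ⟨S, T, hST⟩ := exists_abs_expect_rectangle_eq_cutNorm (f + g)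
  simp only [← hST, Pi.add_apply, ite_add_zero, expect_add_distrib]
  exact (abs_add_le _ _).trans (add_le_add (abs_expect_rectangle_le_cutNorm f S T)
    (abs_expect_rectangle_le_cutNorm g S T))

lemma cutNorm_le_expect_abs (g : V × V → ℝ) : cutNorm g ≤ 𝔼 p, |g p| := by
  refine ciSup_le fun R ↦ (abs_expect_le _ _).trans (expect_le_expect fun p _ ↦ ?_)
  split_ifs <;> simp

lemma expect_mul_le_expect_of_nonneg (G : V → ℝ) {a : V → ℝ} (ha : ∀ v, a v ∈ Set.Icc 0 1) :
    𝔼 v, a v * G v ≤ 𝔼 v, if 0 ≤ G v then G v else 0 := by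
  refine expect_le_expect fun v _ ↦ ?_
  split_ifs with hv
  · exact mul_le_of_le_one_left hv (ha v).2
  · exact mul_nonpos_of_nonneg_of_nonpos (ha v).1 (not_le.1 hv).le

-- A bilinear form on `[0, 1]^V × [0, 1]^V` is maximised at indicator functions.
lemma expect_mul_mul_le_cutNorm (g : V × V → ℝ) {a b : V → ℝ} (ha : ∀ v, a v ∈ Set.Icc 0 1)
    (hb : ∀ v, b v ∈ Set.Icc 0 1) : 𝔼 u, 𝔼 v, g (u, v) * (a u * b v) ≤ cutNorm g := by
  set S : Finset V := univ.filter fun u ↦ 0 ≤ 𝔼 v, g (u, v) * b v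
  set T : Finset V := univ.filter fun v ↦ 0 ≤ 𝔼 u, if u ∈ S then g (u, v) else 0
  calc 𝔼 u, 𝔼 v, g (u, v) * (a u * b v)
    _ = 𝔼 u, a u * 𝔼 v, g (u, v) * b v := by
      simp only [mul_expect]; congr! 2; ring
    _ ≤ 𝔼 u, if u ∈ S then 𝔼 v, g (u, v) * b v else 0 := by
      simpa [S] using expect_mul_le_expect_of_nonneg (fun u ↦ 𝔼 v, g (u, v) * b v) ha
    _ = 𝔼 u, 𝔼 v, b v * if u ∈ S then g (u, v) else 0 := by
      congr! 1 with u; split_ifs <;> simp [mul_comm]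
    _ = 𝔼 v, b v * 𝔼 u, if u ∈ S then g (u, v) else 0 := by
      rw [expect_comm]; simp only [mul_expect]
    _ ≤ 𝔼 v, if v ∈ T then 𝔼 u, (if u ∈ S then g (u, v) else 0) else 0 := by
      simpa [T] using
        expect_mul_le_expect_of_nonneg (fun v ↦ 𝔼 u, if u ∈ S then g (u, v) else 0) hb
    _ = 𝔼 p : V × V, if p ∈ S ×ˢ T then g p else 0 := by
      rw [← univ_product_univ, expect_product, expect_comm]
      simp only [mem_product, ite_and]
      congr! 1 with v; split_ifs <;> simp
    _ ≤ cutNorm g := (le_abs_self _).trans (abs_expect_rectangle_le_cutNorm g S T)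

lemma abs_expect_mul_mul_le_cutNorm (g : V × V → ℝ) {a b : V → ℝ} (ha : ∀ v, a v ∈ Set.Icc 0 1)
    (hb : ∀ v, b v ∈ Set.Icc 0 1) : |𝔼 u, 𝔼 v, g (u, v) * (a u * b v)| ≤ cutNorm g := by
  refine abs_le'.2 ⟨expect_mul_mul_le_cutNorm g ha hb, ?_⟩
  simpa [expect_neg_distrib, cutNorm_neg] using expect_mul_mul_le_cutNorm (-g) ha hb

end CutNorm

section Truncation

variable {Q : Type*}

/-- The first `t` letters of an infinite word. -/
def trunc (t : ℕ) (x : ℕ → Q) : Fin t → Q := fun i ↦ x i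

/-- The truncation of a pair of infinite words, i.e. the pair of level-`t` cells it lies in. -/
def pairTrunc (t : ℕ) : (ℕ → Q) × (ℕ → Q) → (Fin t → Q) × (Fin t → Q) :=
  Prod.map (trunc t) (trunc t)

lemma trunc_factorsThrough {s t : ℕ} (hst : s ≤ t) :
    (trunc (Q := Q) s).FactorsThrough (trunc t) := fun _ _ h ↦
  funext fun i ↦ congrFun h (Fin.castLE hst i)

lemma pairTrunc_factorsThrough {s t : ℕ} (hst : s ≤ t) :
    (pairTrunc (Q := Q) s).FactorsThrough (pairTrunc t) := fun _ _ h ↦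
  Prod.ext (trunc_factorsThrough hst (congrArg Prod.fst h))
    (trunc_factorsThrough hst (congrArg Prod.snd h))

end Truncation

section WeakRegularity

lemma exists_seq_eq_of_prefix {A : Type*} (G : ∀ t, (Fin t → A) → A) :
    ∃ a : ℕ → A, ∀ t, a t = G t fun i ↦ a i :=
  ⟨WellFounded.fix Nat.lt_wfRel.wf fun t ih ↦ G t fun i ↦ ih i i.2,
    fun _ ↦ WellFounded.fix_eq ..⟩

lemma factorsThrough_rectangle {V Q : Type*} {φ : V → ℕ → Q} {S T : Finset V} {t : ℕ}
    (hS : ∀ u v, φ u t = φ v t → (u ∈ S ↔ v ∈ S)) (hT : ∀ u v, φ u t = φ v t → (u ∈ T ↔ v ∈ T)) :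
    FactorsThrough (fun p ↦ if p ∈ S ×ˢ T then (1 : ℝ) else 0)
      (pairTrunc (t + 1) ∘ Prod.map φ φ) := by
  intro p q h
  have h1 : φ p.1 t = φ q.1 t := congrFun (congrArg Prod.fst h) (Fin.last t)
  have h2 : φ p.2 t = φ q.2 t := congrFun (congrArg Prod.snd h) (Fin.last t)
  simp only [mem_product, hS _ _ h1, hT _ _ h2]

variable {V C : Type*} [Fintype V]

/-- The average of a kernel over the pairs of level-`t` cells of the vertex words `φ`. -/
noncomputable def levelAvg {Q : Type*} (φ : V → ℕ → Q) (t : ℕ) (f : V × V → ℝ) : V × V → ℝ :=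
  fiberAvg (pairTrunc t ∘ Prod.map φ φ) f

-- The letter `φ v t` records the sides of `v` in rectangles on which the cut norms of the
-- level-`t` errors are attained; the energy increment is then Cauchy–Schwarz.
lemma exists_sq_cutNorm_sub_levelAvg_le (f : C → V × V → ℝ) :
    ∃ φ : V → ℕ → C → Bool × Bool, ∀ t h, cutNorm (f h - levelAvg φ t (f h)) ^ 2 ≤
      𝔼 p, levelAvg φ (t + 1) (f h) p ^ 2 - 𝔼 p, levelAvg φ t (f h) p ^ 2 := by
  choose S T hST using exists_abs_expect_rectangle_eq_cutNorm (V := V)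
  let err (t : ℕ) (a : Fin t → V → C → Bool × Bool) (h : C) : V × V → ℝ :=
    f h - fiberAvg (Prod.map (fun u i ↦ a i u) (fun v i ↦ a i v)) (f h)
  obtain ⟨a, ha⟩ := exists_seq_eq_of_prefix fun t (a : Fin t → V → C → Bool × Bool) v h ↦
    (decide (v ∈ S (err t a h)), decide (v ∈ T (err t a h)))
  let φ : V → ℕ → C → Bool × Bool := fun v t ↦ a t v
  refine ⟨φ, fun t h ↦ ?_⟩
  have hletter : ∀ v, φ v t h = (decide (v ∈ S (f h - levelAvg φ t (f h))),
      decide (v ∈ T (f h - levelAvg φ t (f h)))) := fun v ↦ congrFun (congrFun (ha t) v) h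
  set g := f h - levelAvg φ t (f h)
  have hS : ∀ u v, φ u t = φ v t → (u ∈ S g ↔ v ∈ S g) := fun u v huv ↦ by
    simpa [hletter] using congrArg Prod.fst (congrFun huv h)
  have hT : ∀ u v, φ u t = φ v t → (u ∈ T g ↔ v ∈ T g) := fun u v huv ↦ by
    simpa [hletter] using congrArg Prod.snd (congrFun huv h)
  calc cutNorm g ^ 2
    _ = (𝔼 p, g p * if p ∈ S g ×ˢ T g then 1 else 0) ^ 2 := by
      simp only [← hST, sq_abs, mul_ite, mul_one, mul_zero]
    _ ≤ _ := sq_expect_sub_fiberAvg_mul_le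
      (fun p q hpq ↦ pairTrunc_factorsThrough t.le_succ hpq) (f h)
      (factorsThrough_rectangle hS hT) fun p ↦ by split_ifs <;> norm_num

end WeakRegularity

section Counting

variable {V ι : Type*} [Fintype V] [Fintype ι] [DecidableEq ι]

/-- The density of homomorphisms from the digraph with arc set `E` into the kernels `K`, where
the arc `q` is mapped to the kernel `K q`. -/
noncomputable def homDensity (E : Finset (ι × ι)) (K : ι × ι → V × V → ℝ) : ℝ :=
  𝔼 v : ι → V, ∏ q ∈ E, K q (v q.1, v q.2)

lemma expect_update [Nonempty V] (a : ι) (Φ : (ι → V) → ℝ) :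
    𝔼 v, 𝔼 x, Φ (update v a x) = 𝔼 v, Φ v := by
  have hswap : 𝔼 z : (ι → V) × V, Φ (update z.1 a z.2) = 𝔼 z : (ι → V) × V, Φ z.1 :=
    expect_nbij' (fun z ↦ (update z.1 a z.2, z.1 a)) (fun z ↦ (update z.1 a z.2, z.1 a))
      (by simp) (by simp) (by simp) (by simp) (by simp)
  rw [← univ_product_univ, expect_product, expect_product] at hswap
  simpa using hswap

lemma abs_expect_mul_le_cutNorm [Nonempty V] {a b : ι} (hab : a ≠ b) (g : V × V → ℝ)
    {α β : (ι → V) → ℝ} (hα : ∀ v, α v ∈ Set.Icc 0 1) (hβ : ∀ v, β v ∈ Set.Icc 0 1)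
    (hαb : ∀ v x, α (update v b x) = α v) (hβa : ∀ v x, β (update v a x) = β v) :
    |𝔼 v : ι → V, g (v a, v b) * (α v * β v)| ≤ cutNorm g := by
  have hresample : ∀ v x y, g (update (update v a x) b y a, update (update v a x) b y b) *
      (α (update (update v a x) b y) * β (update (update v a x) b y)) =
        g (x, y) * (α (update v a x) * β (update v b y)) := fun v x y ↦ by
    rw [hαb, update_comm hab, hβa, update_self, update_of_ne hab.symm, update_self]
  rw [← expect_update b, ← expect_update a]
  simp only [hresample]
  exact (abs_expect_le _ _).trans <| expect_le univ_nonempty fun v _ ↦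
    abs_expect_mul_mul_le_cutNorm g (fun x ↦ hα _) fun y ↦ hβ _

lemma prod_mem_Icc {α : Type*} {s : Finset α} {F : α → ℝ} (h : ∀ q ∈ s, F q ∈ Set.Icc 0 1) :
    ∏ q ∈ s, F q ∈ Set.Icc 0 1 :=
  ⟨prod_nonneg fun q hq ↦ (h q hq).1, prod_le_one (fun q hq ↦ (h q hq).1) fun q hq ↦ (h q hq).2⟩

lemma ne_of_isOriented {α : Type*} {E : Finset (α × α)} (hE : IsOriented fun a b ↦ (a, b) ∈ E)
    {q : α × α} (hq : q ∈ E) : q.1 ≠ q.2 := fun hloop ↦ by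
  have hmem : (q.1, q.1) ∈ E := by rwa [← Prod.mk.eta (p := q), ← hloop] at hq
  exact hE _ _ hmem hmem

lemma abs_homDensity_sub_le_of_eqOn [Nonempty V] {E : Finset (ι × ι)}
    (hE : IsOriented fun a b ↦ (a, b) ∈ E) {p : ι × ι} (hp : p ∈ E)
    {F G : ι × ι → V × V → ℝ} (hG : ∀ q x, G q x ∈ Set.Icc 0 1) (hFG : ∀ q ≠ p, F q = G q) :
    |homDensity E F - homDensity E G| ≤ cutNorm (F p - G p) := by
  obtain ⟨a, b⟩ := p
  have hab : a ≠ b := ne_of_isOriented hE hp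
  set D := (E.erase (a, b)).filter fun q ↦ q.1 ≠ b ∧ q.2 ≠ b
  set D' := (E.erase (a, b)).filter fun q ↦ ¬(q.1 ≠ b ∧ q.2 ≠ b)
  have hD'a : ∀ q ∈ D', q.1 ≠ a ∧ q.2 ≠ a := by
    rintro ⟨c, d⟩ hq
    have := hE a b hp
    grind
  have hsplit : ∀ v : ι → V, (∏ q ∈ E, F q (v q.1, v q.2)) - ∏ q ∈ E, G q (v q.1, v q.2) =
      (F (a, b) - G (a, b)) (v a, v b) *
        ((∏ q ∈ D, G q (v q.1, v q.2)) * ∏ q ∈ D', G q (v q.1, v q.2)) := fun v ↦ by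
    rw [prod_filter_mul_prod_filter_not, ← mul_prod_erase _ _ hp, ← mul_prod_erase _ _ hp,
      prod_congr rfl fun q hq ↦ by rw [hFG q (ne_of_mem_erase hq)], ← sub_mul, Pi.sub_apply]
  rw [homDensity, homDensity, ← expect_sub_distrib, expect_congr rfl fun v _ ↦ hsplit v]
  refine abs_expect_mul_le_cutNorm hab _ (fun v ↦ prod_mem_Icc fun q _ ↦ hG _ _)
    (fun v ↦ prod_mem_Icc fun q _ ↦ hG _ _) (fun v x ↦ prod_congr rfl fun q hq ↦ ?_)
    fun v x ↦ prod_congr rfl fun q hq ↦ ?_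
  · rw [update_of_ne (mem_filter.1 hq).2.1, update_of_ne (mem_filter.1 hq).2.2]
  · rw [update_of_ne (hD'a q hq).1, update_of_ne (hD'a q hq).2]

lemma abs_homDensity_sub_le [Nonempty V] {E : Finset (ι × ι)}
    (hE : IsOriented fun a b ↦ (a, b) ∈ E) {F G : ι × ι → V × V → ℝ}
    (hF : ∀ q x, F q x ∈ Set.Icc 0 1) (hG : ∀ q x, G q x ∈ Set.Icc 0 1) :
    |homDensity E F - homDensity E G| ≤ ∑ q ∈ E, cutNorm (F q - G q) := by
  have hybrid : ∀ s ⊆ E, |homDensity E (s.piecewise F G) - homDensity E G| ≤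
      ∑ q ∈ s, cutNorm (F q - G q) := by
    intro s
    induction s using Finset.induction_on with
    | empty => simp
    | insert p s hps ih =>
      intro hs
      have hp := abs_homDensity_sub_le_of_eqOn hE (hs (mem_insert_self p s))
        (F := (insert p s).piecewise F G) (G := s.piecewise F G)
        (fun q x ↦ by by_cases hq : q ∈ s <;> simp [hq, hF q x, hG q x])
        fun q hq ↦ piecewise_insert_of_ne _ _ _ hq
      rw [piecewise_insert_self, piecewise_eq_of_notMem _ _ _ hps] at hp
      rw [sum_insert hps]
      exact (abs_sub_le _ _ _).trans (add_le_add hp (ih ((subset_insert p s).trans hs)))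
  have hEq : homDensity E (E.piecewise F G) = homDensity E F :=
    expect_congr rfl fun v _ ↦ prod_congr rfl fun q hq ↦ by rw [piecewise_eq_of_mem _ _ _ hq]
  exact hEq ▸ hybrid E subset_rfl

end Counting

section UniformMeasure

variable {Ω Ω' : Type*} [MeasurableSpace Ω] [MeasurableSingletonClass Ω] [MeasurableSpace Ω']
  [MeasurableSingletonClass Ω']

lemma uniformOn_univ_singleton [Fintype Ω] (x : Ω) :
    uniformOn (Set.univ : Set Ω) {x} = (Fintype.card Ω : ENNReal)⁻¹ := by
  simp [uniformOn_univ]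

lemma integral_uniformOn_univ [Fintype Ω] [Nonempty Ω] (f : Ω → ℝ) :
    ∫ x, f x ∂uniformOn (Set.univ : Set Ω) = 𝔼 x, f x := by
  rw [integral_fintype .of_finite, Fintype.expect_eq_sum_div_card, sum_div]
  simp [Measure.real, uniformOn_univ_singleton, div_eq_inv_mul]

lemma uniformOn_univ_prod_uniformOn_univ [Finite Ω] [Nonempty Ω] [Finite Ω'] [Nonempty Ω'] :
    (uniformOn (Set.univ : Set Ω)).prod (uniformOn (Set.univ : Set Ω')) = uniformOn Set.univ := by
  have := Fintype.ofFinite Ω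
  have := Fintype.ofFinite Ω'
  refine Measure.ext_of_singleton fun ⟨x, y⟩ ↦ ?_
  rw [← Set.singleton_prod_singleton, Measure.prod_prod, Set.singleton_prod_singleton]
  simp only [uniformOn_univ_singleton, Fintype.card_prod, Nat.cast_mul]
  rw [ENNReal.mul_inv (by simp) (by simp)]

end UniformMeasure

section ColorLimit

variable {I : Type*} {𝒰 : Filter I} {V : I → Type*} [∀ m, Fintype (V m)]
  {C K : Type*} [MeasurableSpace C] [TopologicalSpace C] [MeasurableSpace K] [TopologicalSpace K]

/-- The colourings `c m` of `V m × V m`, with vertex labels `φ m` in a compact space `K`, converge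
along `𝒰`: labels of independent uniform vertices converge in law to `μ`, and the law of
(labels, colour) of a uniform pair converges to `(μ × μ) ⊗ κ`. Thus `κ (x, y)` is the colour
distribution of the limit object at `(x, y)`. -/
structure IsColorLimit (𝒰 : Filter I) (φ : ∀ m, V m → K) (c : ∀ m, V m × V m → C)
    (μ : Measure K) (κ : Kernel (K × K) C) : Prop where
  tendsto_vertices : ∀ (k : ℕ) {F : (Fin k → K) → ℝ}, Continuous F →
    Tendsto (fun m ↦ 𝔼 v : Fin k → V m, F (φ m ∘ v)) 𝒰 (𝓝 (∫ x, F x ∂Measure.pi fun _ ↦ μ))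
  tendsto_pairs : ∀ {F : (K × K) × C → ℝ}, Continuous F →
    Tendsto (fun m ↦ 𝔼 p : V m × V m, F (Prod.map (φ m) (φ m) p, c m p)) 𝒰
      (𝓝 (∫ z, F z ∂(μ.prod μ ⊗ₘ κ)))

lemma tendsto_integral_of_tendsto_map {Ω : I → Type*} [∀ m, MeasurableSpace (Ω m)]
    [CompactSpace K] [OpensMeasurableSpace K] {P : ∀ m, ProbabilityMeasure (Ω m)}
    {e : ∀ m, Ω m → K} (he : ∀ m, Measurable (e m)) {ρ : ProbabilityMeasure K}
    (hρ : Tendsto (fun m ↦ (P m).map (he m).aemeasurable) 𝒰 (𝓝 ρ)) {F : K → ℝ}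
    (hF : Continuous F) : Tendsto (fun m ↦ ∫ ω, F (e m ω) ∂(P m : Measure (Ω m))) 𝒰
      (𝓝 (∫ x, F x ∂(ρ : Measure K))) := by
  refine (ProbabilityMeasure.tendsto_iff_forall_integral_tendsto.1 hρ
    (BoundedContinuousFunction.mkOfCompact ⟨F, hF⟩)).congr fun m ↦ ?_
  exact integral_map (he m).aemeasurable (hF.measurable.aestronglyMeasurable)

variable [CompactSpace K] [T2Space K] [SecondCountableTopology K] [BorelSpace K]

lemma tendsto_integral_pi_of_tendsto_map {Ω : I → Type*} [∀ m, MeasurableSpace (Ω m)]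
    {P : ∀ m, ProbabilityMeasure (Ω m)} {e : ∀ m, Ω m → K} (he : ∀ m, Measurable (e m))
    {ρ : ProbabilityMeasure K} (hρ : Tendsto (fun m ↦ (P m).map (he m).aemeasurable) 𝒰 (𝓝 ρ))
    {k : ℕ} {F : (Fin k → K) → ℝ} (hF : Continuous F) :
    Tendsto (fun m ↦ ∫ ω : Fin k → Ω m, F (e m ∘ ω) ∂Measure.pi fun _ ↦ (P m : Measure (Ω m))) 𝒰
      (𝓝 (∫ x, F x ∂Measure.pi fun _ ↦ (ρ : Measure K))) := by
  have hpi : Tendsto (fun m ↦ ProbabilityMeasure.pi fun _ : Fin k ↦ (P m).map (he m).aemeasurable)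
      𝒰 (𝓝 (.pi fun _ ↦ ρ)) :=
    (ProbabilityMeasure.continuous_pi.tendsto fun _ ↦ ρ).comp (tendsto_pi_nhds.2 fun _ ↦ hρ)
  refine ((ProbabilityMeasure.tendsto_iff_forall_integral_tendsto.1 hpi)
    (.mkOfCompact ⟨F, hF⟩)).congr fun m ↦ ?_
  change ∫ x, F x ∂Measure.pi (fun _ ↦ (P m : Measure (Ω m)).map (e m)) = _
  rw [← Measure.pi_map_pi fun _ ↦ (he m).aemeasurable]
  have hmeas : Measurable fun (ω : Fin k → Ω m) i ↦ e m (ω i) :=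
    measurable_pi_lambda _ fun i ↦ (he m).comp (measurable_pi_apply i)
  exact integral_map hmeas.aemeasurable hF.measurable.aestronglyMeasurable

theorem exists_isColorLimit [Finite C] [Nonempty C] [DiscreteTopology C]
    [DiscreteMeasurableSpace C] (𝒰 : Ultrafilter I) [∀ m, Nonempty (V m)]
    (φ : ∀ m, V m → K) (c : ∀ m, V m × V m → C) :
    ∃ (μ : Measure K) (κ : Kernel (K × K) C), IsProbabilityMeasure μ ∧ IsMarkovKernel κ ∧
      IsColorLimit 𝒰 φ c μ κ := by
  let : ∀ m, MeasurableSpace (V m) := fun _ ↦ ⊤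
  let P (m : I) : ProbabilityMeasure (V m) := ⟨uniformOn Set.univ, inferInstance⟩
  let P₂ (m : I) : ProbabilityMeasure (V m × V m) := ⟨uniformOn Set.univ, inferInstance⟩
  have hφ (m) : Measurable (φ m) := .of_discrete
  let e (m : I) (p : V m × V m) : (K × K) × C := (Prod.map (φ m) (φ m) p, c m p)
  have he (m) : Measurable (e m) := .of_discrete
  let μs (m : I) : ProbabilityMeasure K := (P m).map (hφ m).aemeasurable
  let ρs (m : I) : ProbabilityMeasure ((K × K) × C) := (P₂ m).map (he m).aemeasurable
  obtain ⟨μ, hμ⟩ : ∃ μ, Tendsto μs 𝒰 (𝓝 μ) := ⟨_, (𝒰.map μs).le_nhds_lim⟩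
  obtain ⟨ρ, hρ⟩ : ∃ ρ, Tendsto ρs 𝒰 (𝓝 ρ) := ⟨_, (𝒰.map ρs).le_nhds_lim⟩
  have hfst : (ρ : Measure ((K × K) × C)).fst = (μ : Measure K).prod μ := by
    have hprod : Tendsto (fun m ↦ (μs m).prod (μs m)) 𝒰 (𝓝 (μ.prod μ)) :=
      (ProbabilityMeasure.continuous_prod.tendsto (μ, μ)).comp (hμ.prodMk_nhds hμ)
    have hmap := ProbabilityMeasure.tendsto_map_of_tendsto_of_continuous ρs ρ hρ continuous_fst
    suffices ρ.map continuous_fst.aemeasurable = μ.prod μ from congrArg Subtype.val this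
    refine tendsto_nhds_unique (hmap.congr fun m ↦ Subtype.ext ?_) hprod
    change ((uniformOn Set.univ).map (e m)).map Prod.fst =
      ((uniformOn Set.univ).map (φ m)).prod ((uniformOn Set.univ).map (φ m))
    rw [Measure.map_map measurable_fst (he m), Measure.map_prod_map _ _ (hφ m) (hφ m),
      uniformOn_univ_prod_uniformOn_univ]
    rfl
  refine ⟨μ, (ρ : Measure ((K × K) × C)).condKernel, inferInstance, inferInstance, ?_, ?_⟩
  · intro k F hF
    simpa [P, ← uniformOn_pi, Set.pi_univ, integral_uniformOn_univ] using
      tendsto_integral_pi_of_tendsto_map hφ hμ hF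
  · intro F hF
    rw [← hfst, Measure.disintegrate]
    simpa [P₂, integral_uniformOn_univ] using tendsto_integral_of_tendsto_map he hρ hF

end ColorLimit

section EnergyIncrement

variable {I : Type*} {V : I → Type*} {C : Type*} [∀ m, Fintype (V m)]

lemma eventually_eventually_sub_lt (𝒰 : Ultrafilter I) {e : I → ℕ → ℝ} (hmono : ∀ m, Monotone (e m))
    (he : ∀ m t, e m t ∈ Set.Icc 0 1) {η : ℝ} (hη : 0 < η) :
    ∀ᶠ t in atTop, ∀ᶠ m in 𝒰, e m (t + 1) - e m t < η := by
  have hlim (t : ℕ) : ∃ l ∈ Set.Icc (0 : ℝ) 1, Tendsto (e · t) 𝒰 (𝓝 l) :=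
    isCompact_Icc.ultrafilter_le_nhds (𝒰.map (e · t))
      (le_principal_iff.2 <| Ultrafilter.mem_map.2 <| univ_mem' (he · t))
  choose l hl htend using hlim
  have hl_mono : Monotone l := fun s t hst ↦
    le_of_tendsto_of_tendsto' (htend s) (htend t) fun m ↦ hmono m hst
  have hl_conv := tendsto_atTop_ciSup hl_mono ⟨1, Set.forall_mem_range.2 fun t ↦ (hl t).2⟩
  have hgap : Tendsto (fun t ↦ l (t + 1) - l t) atTop (𝓝 0) := by
    simpa using (hl_conv.comp (tendsto_add_atTop_nat 1)).sub hl_conv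
  filter_upwards [hgap.eventually_lt_const hη] with t ht
  exact ((htend (t + 1)).sub (htend t)).eventually_lt_const ht

theorem exists_eventually_cutNorm_sub_levelAvg_lt [∀ m, Nonempty (V m)] (𝒰 : Ultrafilter I)
    {f : ∀ m, C → V m × V m → ℝ} (hf : ∀ m h p, f m h p ∈ Set.Icc 0 1) :
    ∃ φ : ∀ m, V m → ℕ → C → Bool × Bool, ∀ h, ∀ η > 0, ∀ᶠ t in atTop, ∀ᶠ m in 𝒰,
      cutNorm (f m h - levelAvg (φ m) t (f m h)) < η := by
  choose φ hφ using fun m ↦ exists_sq_cutNorm_sub_levelAvg_le (f m)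
  refine ⟨φ, fun h η hη ↦ ?_⟩
  have hmono (m : I) : Monotone fun t ↦ 𝔼 p, levelAvg (φ m) t (f m h) p ^ 2 :=
    monotone_nat_of_le_succ fun t ↦ sub_nonneg.1 ((sq_nonneg _).trans (hφ m t h))
  have henergy (m t) : 𝔼 p, levelAvg (φ m) t (f m h) p ^ 2 ∈ Set.Icc (0 : ℝ) 1 :=
    ⟨expect_nonneg fun p _ ↦ sq_nonneg _, expect_le univ_nonempty fun p _ ↦
      have hp := fiberAvg_mem_Icc (pairTrunc t ∘ Prod.map (φ m) (φ m)) (hf m h) p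
      pow_le_one₀ hp.1 hp.2⟩
  filter_upwards [eventually_eventually_sub_lt 𝒰 hmono henergy (pow_pos hη 2)] with t ht
  filter_upwards [ht] with m hm
  exact lt_of_pow_lt_pow_left₀ 2 hη.le ((hφ m t h).trans_lt hm)

end EnergyIncrement

section FiniteLabel

variable {Ω β : Type*} [MeasurableSpace Ω] {ν : Measure Ω}

lemma ae_measure_fiber_ne_zero [Finite β] (ℓ : Ω → β) : ∀ᵐ ω ∂ν, ν (ℓ ⁻¹' {ℓ ω}) ≠ 0 := by
  have hnull : ν (⋃ b ∈ {b | ν (ℓ ⁻¹' {b}) = 0}, ℓ ⁻¹' {b}) = 0 :=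
    (measure_biUnion_null_iff (Set.toFinite _).countable).2 fun b hb ↦ hb
  filter_upwards [measure_eq_zero_iff_ae_notMem.1 hnull] with ω hω h0
  exact hω (Set.mem_biUnion (x := ℓ ω) h0 rfl)

variable [MeasurableSpace β] [DiscreteMeasurableSpace β] {ℓ : Ω → β}

lemma setIntegral_preimage_eq_sum [Fintype β] (hℓ : Measurable ℓ) {g : Ω → ℝ} (hg : Integrable g ν)
    (B : Set β) : ∫ ω in ℓ ⁻¹' B, g ω ∂ν = ∑ b with b ∈ B, ∫ ω in ℓ ⁻¹' {b}, g ω ∂ν := by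
  rw [← integral_biUnion_finset _ (fun b _ ↦ hℓ .of_discrete) _ fun b _ ↦ hg.integrableOn]
  · congr 2
    ext
    simp
  · exact fun b _ b' _ hbb' ↦ Disjoint.preimage _ (by simpa using hbb')

variable [IsFiniteMeasure ν] [Finite β]

lemma integrable_comp_of_finite (hℓ : Measurable ℓ) (w : β → ℝ) : Integrable (fun ω ↦ w (ℓ ω)) ν :=
  (Integrable.of_finite (f := w) (μ := ν.map ℓ)).comp_measurable hℓ

lemma setAverage_fiber_ae_eq_condExp (hℓ : Measurable ℓ) {g : Ω → ℝ} (hg : Integrable g ν) :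
    (fun ω ↦ ⨍ x in ℓ ⁻¹' {ℓ ω}, g x ∂ν) =ᵐ[ν] ν[g | .comap ℓ inferInstance] := by
  have := Fintype.ofFinite β
  have hint := integrable_comp_of_finite (ν := ν) hℓ fun b ↦ ⨍ x in ℓ ⁻¹' {b}, g x ∂ν
  have hmeas : Measurable[.comap ℓ inferInstance] fun ω ↦ ⨍ x in ℓ ⁻¹' {ℓ ω}, g x ∂ν :=
    Measurable.comp (g := fun b ↦ ⨍ x in ℓ ⁻¹' {b}, g x ∂ν) .of_discrete (comap_measurable ℓ)
  refine ae_eq_condExp_of_forall_setIntegral_eq hℓ.comap_le hg (fun _ _ _ ↦ hint.integrableOn) ?_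
    hmeas.stronglyMeasurable.aestronglyMeasurable
  rintro _ ⟨B, -, rfl⟩ -
  rw [setIntegral_preimage_eq_sum hℓ hint, setIntegral_preimage_eq_sum hℓ hg]
  refine sum_congr rfl fun b _ ↦ ?_
  calc ∫ ω in ℓ ⁻¹' {b}, ⨍ x in ℓ ⁻¹' {ℓ ω}, g x ∂ν ∂ν
    _ = ∫ _ in ℓ ⁻¹' {b}, ⨍ x in ℓ ⁻¹' {b}, g x ∂ν ∂ν :=
      setIntegral_congr_fun (hℓ .of_discrete) fun ω hω ↦ by rw [Set.mem_preimage.1 hω]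
    _ = ∫ ω in ℓ ⁻¹' {b}, g ω ∂ν := by
      rw [setIntegral_const, measure_smul_setAverage _ (measure_ne_top ν _)]

end FiniteLabel

lemma ae_tendsto_setAverage_fiber {Ω : Type*} [mΩ : MeasurableSpace Ω]
    {ν : Measure Ω} [IsFiniteMeasure ν] {β : ℕ → Type*} [∀ t, Finite (β t)]
    [∀ t, MeasurableSpace (β t)] [∀ t, DiscreteMeasurableSpace (β t)] {ℓ : ∀ t, Ω → β t}
    (hmono : ∀ ⦃s t⦄, s ≤ t → (ℓ s).FactorsThrough (ℓ t))
    (hgen : ⨆ t, .comap (ℓ t) inferInstance = mΩ) {g : Ω → ℝ} (hgm : Measurable g)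
    (hg : Integrable g ν) :
    ∀ᵐ ω ∂ν, Tendsto (fun t ↦ ⨍ x in ℓ t ⁻¹' {ℓ t ω}, g x ∂ν) atTop (𝓝 (g ω)) := by
  have hle (t : ℕ) : .comap (ℓ t) inferInstance ≤ mΩ :=
    hgen ▸ le_iSup (fun t ↦ MeasurableSpace.comap (ℓ t) inferInstance) t
  let ℱ : Filtration ℕ mΩ :=
    { seq := fun t ↦ .comap (ℓ t) inferInstance
      mono' := by
        rintro s t hst _ ⟨B, -, rfl⟩
        refine ⟨ℓ t '' (ℓ s ⁻¹' B), .of_discrete,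
          Set.Subset.antisymm ?_ (Set.subset_preimage_image _ _)⟩
        rintro ω ⟨ω', hω', hωω'⟩
        rwa [Set.mem_preimage, ← hmono hst hωω']
      le' := hle }
  have hcell (t : ℕ) := setAverage_fiber_ae_eq_condExp (measurable_iff_comap_le.2 (hle t)) hg
  have hconv := tendsto_ae_condExp (μ := ν) (ℱ := ℱ) g
  rw [show ⨆ t, ℱ t = mΩ from hgen,
    condExp_of_stronglyMeasurable le_rfl hgm.stronglyMeasurable hg] at hconv
  filter_upwards [hconv, ae_all_iff.2 hcell] with ω hω hcellω
  exact hω.congr fun t ↦ (hcellω t).symm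

section Cells

variable {Q : Type*}

section Continuity

variable [TopologicalSpace Q]

lemma continuous_trunc (t : ℕ) : Continuous (trunc (Q := Q) t) :=
  continuous_pi fun _ ↦ continuous_apply _

lemma continuous_pairTrunc (t : ℕ) : Continuous (pairTrunc (Q := Q) t) :=
  (continuous_trunc t).prodMap (continuous_trunc t)

end Continuity

variable [MeasurableSpace Q]

lemma measurable_trunc (t : ℕ) : Measurable (trunc (Q := Q) t) :=
  measurable_pi_lambda _ fun _ ↦ measurable_pi_apply _

lemma measurable_pairTrunc (t : ℕ) : Measurable (pairTrunc (Q := Q) t) :=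
  (measurable_trunc t).prodMap (measurable_trunc t)

lemma iSup_comap_pairTrunc :
    ⨆ t, MeasurableSpace.comap (pairTrunc (Q := Q) t) inferInstance =
      (inferInstance : MeasurableSpace ((ℕ → Q) × (ℕ → Q))) := by
  refine le_antisymm (iSup_le fun t ↦ (measurable_pairTrunc t).comap_le) ?_
  set 𝓜 := ⨆ t, MeasurableSpace.comap (pairTrunc (Q := Q) t) inferInstance
  have hletter (i : ℕ) : Measurable[𝓜] fun p : (ℕ → Q) × (ℕ → Q) ↦ (p.1 i, p.2 i) := by
    have hlast : Measurable fun b : (Fin (i + 1) → Q) × (Fin (i + 1) → Q) ↦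
        (b.1 (Fin.last i), b.2 (Fin.last i)) := by fun_prop
    refine (hlast.comp (comap_measurable (pairTrunc (i + 1)))).mono ?_ le_rfl
    exact le_iSup (fun t ↦ MeasurableSpace.comap (pairTrunc (Q := Q) t) inferInstance) (i + 1)
  have hid : Measurable[𝓜, Prod.instMeasurableSpace] (id : (ℕ → Q) × (ℕ → Q) → _) :=
    (@measurable_pi_lambda _ _ _ 𝓜 _ _ fun i ↦ measurable_fst.comp (hletter i)).prodMk
      (@measurable_pi_lambda _ _ _ 𝓜 _ _ fun i ↦ measurable_snd.comp (hletter i))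
  exact fun s hs ↦ hid hs

end Cells

section ColorProb

variable {K C : Type*} [MeasurableSpace K] [MeasurableSpace C]

/-- The probability of the colour `h` at a pair of points of the limit object. -/
noncomputable def colorProb (κ : Kernel (K × K) C) (h : C) (p : K × K) : ℝ :=
  (κ p).real {h}

/-- The density, in the limit object `(μ, κ)`, of the maps giving each pair `q ∈ E` the colour
`h q`. -/
noncomputable def limitDensity {ι : Type*} [Fintype ι] (μ : Measure K) (κ : Kernel (K × K) C)
    (E : Finset (ι × ι)) (h : ι × ι → C) : ℝ :=
  ∫ x, ∏ q ∈ E, colorProb κ (h q) (x q.1, x q.2) ∂Measure.pi fun _ ↦ μ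

lemma measurable_colorProb [MeasurableSingletonClass C] (κ : Kernel (K × K) C) (h : C) :
    Measurable (colorProb κ h) :=
  (κ.measurable_coe (measurableSet_singleton h)).ennreal_toReal

variable (κ : Kernel (K × K) C) [IsMarkovKernel κ]

lemma colorProb_mem_Icc (h : C) (p : K × K) : colorProb κ h p ∈ Set.Icc 0 1 :=
  ⟨measureReal_nonneg, measureReal_le_one⟩

variable [MeasurableSingletonClass C]

lemma exists_colorProb_pos [Finite C] (p : K × K) : ∃ h, 0 < colorProb κ h p := by
  have := Fintype.ofFinite C
  have hsum : ∑ h, colorProb κ h p = 1 := by simp [colorProb]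
  obtain ⟨h, -, hpos⟩ := exists_lt_of_sum_lt (s := univ) (f := fun _ : C ↦ (0 : ℝ))
    (g := fun h ↦ colorProb κ h p) (by simp [hsum])
  exact ⟨h, hpos⟩

lemma integrable_colorProb (h : C) (ν : Measure (K × K)) [IsFiniteMeasure ν] :
    Integrable (colorProb κ h) ν :=
  .of_mem_Icc 0 1 (measurable_colorProb κ h).aemeasurable (ae_of_all _ (colorProb_mem_Icc κ h))

end ColorProb

namespace IsColorLimit

variable {I : Type*} {𝒰 : Filter I} {V : I → Type*} [∀ m, Fintype (V m)]
  {C K : Type*} [MeasurableSpace C] [TopologicalSpace C] [MeasurableSpace K] [TopologicalSpace K]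
  [SecondCountableTopology K] [BorelSpace K]
  {φ : ∀ m, V m → K} {c : ∀ m, V m × V m → C} {μ : Measure K} {κ : Kernel (K × K) C}
  [IsProbabilityMeasure μ] [IsMarkovKernel κ]

lemma tendsto_labels (hlim : IsColorLimit 𝒰 φ c μ κ) {F : K × K → ℝ} (hF : Continuous F) :
    Tendsto (fun m ↦ 𝔼 p, F (Prod.map (φ m) (φ m) p)) 𝒰 (𝓝 (∫ p, F p ∂μ.prod μ)) := by
  have hfst : ∫ z, F z.1 ∂(μ.prod μ ⊗ₘ κ) = ∫ p, F p ∂μ.prod μ := by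
    conv_rhs => rw [← Measure.fst_compProd (μ.prod μ) κ]
    exact (integral_map measurable_fst.aemeasurable hF.measurable.aestronglyMeasurable).symm
  exact hfst ▸ hlim.tendsto_pairs (hF.comp continuous_fst)

variable [CompactSpace K] [Finite C] [DiscreteTopology C] [DiscreteMeasurableSpace C]

lemma tendsto_color (hlim : IsColorLimit 𝒰 φ c μ κ) {F : K × K → ℝ} (hF : Continuous F) (h : C) :
    Tendsto (fun m ↦ 𝔼 p, F (Prod.map (φ m) (φ m) p) * fiberIndicator (c m) h p) 𝒰
      (𝓝 (∫ p, F p * colorProb κ h p ∂μ.prod μ)) := by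
  have hcont : Continuous fun z : (K × K) × C ↦ F z.1 * fiberIndicator id h z.2 :=
    (hF.comp continuous_fst).mul 
      ((continuous_of_discreteTopology (f := fiberIndicator id h)).comp continuous_snd)
  have hcolor (p : K × K) : ∫ d, fiberIndicator id h d ∂κ p = colorProb κ h p := by
    simpa [fiberIndicator, colorProb, Set.indicator_apply] using
      integral_indicator_one (μ := κ p) (measurableSet_singleton h)
  have hcompProd : ∫ z, F z.1 * fiberIndicator id h z.2 ∂(μ.prod μ ⊗ₘ κ) =
      ∫ p, F p * colorProb κ h p ∂μ.prod μ := by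
    have hint : Integrable (fun z ↦ F z.1 * fiberIndicator id h z.2) (μ.prod μ ⊗ₘ κ) :=
      (BoundedContinuousFunction.mkOfCompact ⟨_, hcont⟩).integrable _
    simp only [Measure.integral_compProd hint, integral_const_mul, hcolor]
  exact hcompProd ▸ hlim.tendsto_pairs hcont

end IsColorLimit

lemma setAverage_mem_Icc {Ω : Type*} [MeasurableSpace Ω] {ν : Measure Ω} [IsFiniteMeasure ν]
    {f : Ω → ℝ} (hf : ∀ ω, f ω ∈ Set.Icc 0 1) (s : Set Ω) : ⨍ ω in s, f ω ∂ν ∈ Set.Icc 0 1 := by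
  refine ⟨integral_nonneg fun ω ↦ (hf ω).1, ?_⟩
  have hle : ∫ ω in s, f ω ∂ν ≤ ∫ _ in s, 1 ∂ν :=
    integral_mono_of_nonneg (ae_of_all _ fun ω ↦ (hf ω).1) (integrable_const _)
      (ae_of_all _ fun ω ↦ (hf ω).2)
  rw [setAverage_eq, smul_eq_mul]
  exact inv_mul_le_one_of_le₀ (by simpa using hle) measureReal_nonneg

lemma tendsto_of_eventually_eventually_abs_sub_lt {I T : Type*} {𝒰 : Filter I} {𝒯 : Filter T}
    [𝒯.NeBot] {a : I → ℝ} {b : T → I → ℝ} {B : T → ℝ} {A : ℝ}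
    (hab : ∀ η > 0, ∀ᶠ t in 𝒯, ∀ᶠ m in 𝒰, |a m - b t m| < η)
    (hb : ∀ t, Tendsto (b t) 𝒰 (𝓝 (B t))) (hB : Tendsto B 𝒯 (𝓝 A)) : Tendsto a 𝒰 (𝓝 A) := by
  refine Metric.tendsto_nhds.2 fun ε hε ↦ ?_
  obtain ⟨t, hat, hBt⟩ := ((hab (ε / 3) (by positivity)).and
    (Metric.tendsto_nhds.1 hB (ε / 3) (by positivity))).exists
  filter_upwards [hat, Metric.tendsto_nhds.1 (hb t) (ε / 3) (by positivity)] with m hm hbm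
  rw [← Real.dist_eq] at hm
  linarith [dist_triangle4 (a m) (b t m) (B t) A]

section Marginals

variable {ι K : Type*} [Fintype ι] [MeasurableSpace K] (μ : ι → Measure K)
  [∀ i, IsProbabilityMeasure (μ i)]

lemma measurePreserving_comp_injective {κ : Type*} [Fintype κ] {v : κ → ι} (hv : Injective v) :
    MeasurePreserving (fun x : ι → K ↦ x ∘ v) (.pi μ) (.pi (μ ∘ v)) := by
  refine ⟨by fun_prop, ?_⟩
  have hindep := (iIndepFun_pi (μ := μ) (X := fun _ x ↦ x) fun _ ↦ aemeasurable_id).precomp hv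
  refine (hindep.map_fun_eq_pi_map fun _ ↦ (measurable_pi_apply _).aemeasurable).trans ?_
  exact congrArg Measure.pi (funext fun a ↦ (measurePreserving_eval μ (v a)).map_eq)

lemma measurePreserving_eval_pair {a b : ι} (hab : a ≠ b) :
    MeasurePreserving (fun x : ι → K ↦ (x a, x b)) (.pi μ) ((μ a).prod (μ b)) := by
  refine ⟨by fun_prop, ?_⟩
  have hindep := (iIndepFun_pi (μ := μ) (X := fun _ x ↦ x) fun _ ↦ aemeasurable_id).indepFun hab
  rw [(indepFun_iff_map_prod_eq_prod_map_map (measurable_pi_apply a).aemeasurable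
    (measurable_pi_apply b).aemeasurable).1 hindep, (measurePreserving_eval μ a).map_eq,
    (measurePreserving_eval μ b).map_eq]

end Marginals

section Cells

variable {C Q : Type*} [MeasurableSpace C] [MeasurableSpace Q] (μ : Measure (ℕ → Q))
  (κ : Kernel ((ℕ → Q) × (ℕ → Q)) C)

/-- The average probability of the colour `h` over a pair of level-`t` cells (`0` if it is null). -/
noncomputable def cellColorProb (t : ℕ) (h : C) (b : (Fin t → Q) × (Fin t → Q)) : ℝ :=
  ⨍ p in pairTrunc t ⁻¹' {b}, colorProb κ h p ∂μ.prod μ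

variable [IsProbabilityMeasure μ] [IsMarkovKernel κ]

lemma cellColorProb_mem_Icc (t : ℕ) (h : C) (b : (Fin t → Q) × (Fin t → Q)) :
    cellColorProb μ κ t h b ∈ Set.Icc 0 1 :=
  setAverage_mem_Icc (colorProb_mem_Icc κ h) _

variable [DiscreteMeasurableSpace C] [Finite Q] [DiscreteMeasurableSpace Q]

lemma ae_tendsto_cellColorProb (h : C) : ∀ᵐ p ∂μ.prod μ,
    Tendsto (fun t ↦ cellColorProb μ κ t h (pairTrunc t p)) atTop (𝓝 (colorProb κ h p)) :=
  ae_tendsto_setAverage_fiber (fun _ _ ↦ pairTrunc_factorsThrough) iSup_comap_pairTrunc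
    (measurable_colorProb κ h) (integrable_colorProb κ h _)

lemma ae_tendsto_prod_cellColorProb {ι : Type*} [Fintype ι] {E : Finset (ι × ι)}
    (hE : ∀ q ∈ E, q.1 ≠ q.2) (h : ι × ι → C) :
    ∀ᵐ x ∂Measure.pi fun _ ↦ μ, Tendsto (fun t ↦ ∏ q ∈ E, cellColorProb μ κ t (h q)
      (pairTrunc t (x q.1, x q.2))) atTop (𝓝 (∏ q ∈ E, colorProb κ (h q) (x q.1, x q.2))) := by
  have hpair : ∀ q ∈ E, ∀ᵐ x ∂Measure.pi fun _ : ι ↦ μ, Tendsto (fun t ↦ cellColorProb μ κ t (h q)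
      (pairTrunc t (x q.1, x q.2))) atTop (𝓝 (colorProb κ (h q) (x q.1, x q.2))) := fun q hq ↦
    (measurePreserving_eval_pair (fun _ ↦ μ) (hE q hq)).quasiMeasurePreserving.ae
      (ae_tendsto_cellColorProb μ κ (h q))
  filter_upwards [(Finset.eventually_all E).2 hpair] with x hx
  exact tendsto_finsetProd _ hx

end Cells

section DensityLimit

variable {I : Type*} {𝒰 : Filter I} {V : I → Type*} [∀ m, Fintype (V m)] {C Q : Type*}
  [MeasurableSpace C] [Finite C] [TopologicalSpace C] [DiscreteTopology C]
  [DiscreteMeasurableSpace C] [Finite Q] [MeasurableSpace Q] [TopologicalSpace Q]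
  [DiscreteTopology Q] [DiscreteMeasurableSpace Q]
  {φ : ∀ m, V m → ℕ → Q} {c : ∀ m, V m × V m → C} {μ : Measure (ℕ → Q)}
  {κ : Kernel ((ℕ → Q) × (ℕ → Q)) C} [IsProbabilityMeasure μ] [IsMarkovKernel κ]

namespace IsColorLimit

lemma tendsto_levelAvg_sub_cellColorProb (hlim : IsColorLimit 𝒰 φ c μ κ) (t : ℕ) (h : C) :
    Tendsto (fun m ↦ 𝔼 p, |levelAvg (φ m) t (fiberIndicator (c m) h) p -
      cellColorProb μ κ t h (pairTrunc t (Prod.map (φ m) (φ m) p))|) 𝒰 (𝓝 0) := by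
  have := Fintype.ofFinite Q
  set w := cellColorProb μ κ t h
  have hcont (b : (Fin t → Q) × (Fin t → Q)) :
      Continuous (fiberIndicator (pairTrunc t : (ℕ → Q) × (ℕ → Q) → _) b) :=
    (continuous_of_discreteTopology (f := fiberIndicator id b)).comp (continuous_pairTrunc t)
  have hcell (b : (Fin t → Q) × (Fin t → Q)) (g : (ℕ → Q) × (ℕ → Q) → ℝ) :
      ∫ p, fiberIndicator (pairTrunc t) b p * g p ∂μ.prod μ =
        ∫ p in pairTrunc t ⁻¹' {b}, g p ∂μ.prod μ := by
    rw [← integral_indicator (measurable_pairTrunc t .of_discrete)]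
    simp [fiberIndicator, Set.indicator_apply]
  have hbalance (b : (Fin t → Q) × (Fin t → Q)) :
      ∫ p, fiberIndicator (pairTrunc t) b p * colorProb κ h p ∂μ.prod μ -
        w b * ∫ p, fiberIndicator (pairTrunc t) b p ∂μ.prod μ = 0 := by
    have hcount := hcell b 1
    simp only [Pi.one_apply, mul_one, setIntegral_const, smul_eq_mul] at hcount
    rw [hcell, hcount, ← measure_smul_setAverage _ (measure_ne_top _ _), smul_eq_mul]
    exact sub_eq_zero.2 (mul_comm _ _)
  have hlimit (b : (Fin t → Q) × (Fin t → Q)) := ((hlim.tendsto_color (hcont b) h).sub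
    ((hlim.tendsto_labels (hcont b)).const_mul (w b))).abs
  simp only [hbalance, abs_zero] at hlimit
  have hsum := tendsto_finsetSum univ fun b _ ↦ hlimit b
  rw [sum_const_zero] at hsum
  exact hsum.congr fun m ↦ (expect_abs_fiberAvg_sub _ _ w).symm

lemma eventually_cutNorm_sub_cellColorProb_lt (hlim : IsColorLimit 𝒰 φ c μ κ) {h : C}
    (hreg : ∀ η > 0, ∀ᶠ t in atTop, ∀ᶠ m in 𝒰,
      cutNorm (fiberIndicator (c m) h - levelAvg (φ m) t (fiberIndicator (c m) h)) < η)
    {η : ℝ} (hη : 0 < η) : ∀ᶠ t in atTop, ∀ᶠ m in 𝒰, cutNorm (fiberIndicator (c m) h -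
      cellColorProb μ κ t h ∘ pairTrunc t ∘ Prod.map (φ m) (φ m)) < η := by
  filter_upwards [hreg (η / 2) (half_pos hη)] with t ht
  filter_upwards [ht, (hlim.tendsto_levelAvg_sub_cellColorProb t h).eventually_lt_const
    (half_pos hη)] with m hcut havg
  rw [← sub_add_sub_cancel _ (levelAvg (φ m) t (fiberIndicator (c m) h))]
  calc _ ≤ _ := cutNorm_add_le _ _
    _ ≤ _ := add_le_add_right (cutNorm_le_expect_abs _) _
    _ < η := by
      have := add_lt_add hcut havg
      rwa [add_halves] at this

theorem tendsto_homDensity [∀ m, Nonempty (V m)] (hlim : IsColorLimit 𝒰 φ c μ κ)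
    (hreg : ∀ h, ∀ η > 0, ∀ᶠ t in atTop, ∀ᶠ m in 𝒰,
      cutNorm (fiberIndicator (c m) h - levelAvg (φ m) t (fiberIndicator (c m) h)) < η)
    {k : ℕ} {E : Finset (Fin k × Fin k)} (hE : IsOriented fun a b ↦ (a, b) ∈ E)
    (h : Fin k × Fin k → C) :
    Tendsto (fun m ↦ homDensity E fun q ↦ fiberIndicator (c m) (h q)) 𝒰
      (𝓝 (limitDensity μ κ E h)) := by
  refine tendsto_of_eventually_eventually_abs_sub_lt (𝒯 := atTop)
    (b := fun t m ↦ homDensity E fun q ↦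
      cellColorProb μ κ t (h q) ∘ pairTrunc t ∘ Prod.map (φ m) (φ m))
    (B := fun t ↦ ∫ x, ∏ q ∈ E, cellColorProb μ κ t (h q) (pairTrunc t (x q.1, x q.2))
      ∂Measure.pi fun _ ↦ μ) (fun η hη ↦ ?_) (fun t ↦ ?_) ?_
  · have hη' : 0 < η / (#E + 1) := by positivity
    filter_upwards [(Finset.eventually_all E).2 fun q _ ↦
      hlim.eventually_cutNorm_sub_cellColorProb_lt (hreg (h q)) hη'] with t ht
    filter_upwards [(Finset.eventually_all E).2 ht] with m hm
    calc _ ≤ _ := abs_homDensity_sub_le hE (fun q ↦ fiberIndicator_mem_Icc _ _)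
          fun q _ ↦ cellColorProb_mem_Icc μ κ t _ _
      _ ≤ ∑ q ∈ E, η / (#E + 1) := sum_le_sum fun q hq ↦ (hm q hq).le
      _ < η := by
        rw [sum_const, nsmul_eq_mul, mul_div_left_comm]
        exact mul_lt_of_lt_one_right hη ((div_lt_one (by positivity)).2 (lt_add_one _))
  · refine hlim.tendsto_vertices k (F := fun x ↦ ∏ q ∈ E,
      cellColorProb μ κ t (h q) (pairTrunc t (x q.1, x q.2))) ?_
    exact continuous_finsetProd _ fun q _ ↦ ((continuous_of_discreteTopology
      (f := cellColorProb μ κ t (h q))).comp (continuous_pairTrunc t)).comp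
        ((continuous_apply q.1).prodMk (continuous_apply q.2))
  · refine tendsto_integral_of_dominated_convergence 1 (fun t ↦ ?_) (integrable_const 1)
      (fun t ↦ ae_of_all _ fun x ↦ ?_)
      (ae_tendsto_prod_cellColorProb μ κ (fun _ ↦ ne_of_isOriented hE) h)
    · refine (Finset.measurable_prod _ fun q _ ↦ ?_).aestronglyMeasurable
      exact ((Measurable.of_discrete (f := cellColorProb μ κ t (h q))).comp
        (measurable_pairTrunc t)).comp ((measurable_pi_apply q.1).prodMk (measurable_pi_apply q.2))
    · have hmem := prod_mem_Icc (s := E) fun q _ ↦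
        cellColorProb_mem_Icc μ κ t (h q) (pairTrunc t (x q.1, x q.2))
      rw [Real.norm_of_nonneg hmem.1]
      exact hmem.2

end IsColorLimit

end DensityLimit

lemma pi_cond_absolutelyContinuous {ι K : Type*} [Fintype ι] [MeasurableSpace K] (μ : Measure K)
    [IsProbabilityMeasure μ] {s : ι → Set K} (hs : ∀ i, MeasurableSet (s i))
    (h0 : ∀ i, μ (s i) ≠ 0) :
    Measure.pi (fun i ↦ μ[|s i]) ≪ Measure.pi fun _ ↦ μ := by
  have := fun i ↦ cond_isProbabilityMeasure (h0 i)
  suffices Measure.pi (fun i ↦ μ[|s i]) = (Measure.pi fun _ ↦ μ)[|Set.univ.pi s] from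
    this ▸ cond_absolutelyContinuous
  refine Measure.pi_eq fun u _ ↦ ?_
  rw [cond_apply (.univ_pi hs), ← Set.pi_inter_distrib, Measure.pi_pi, Measure.pi_pi]
  simp_rw [cond_apply (hs _)]
  rw [prod_mul_distrib, ENNReal.prod_inv_distrib fun i _ _ _ _ ↦ Or.inl (h0 i)]

lemma exists_card_filter_mem_le {V K : Type*} [Fintype V] [MeasurableSpace K] (ν : V → Measure K)
    [∀ v, IsProbabilityMeasure (ν v)] {Z : V × V → Set (K × K)} (hZ : ∀ p, MeasurableSet (Z p))
    {P : (V → K) → Prop} (hP : ∀ᵐ x ∂Measure.pi ν, P x) :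
    ∃ x, P x ∧ (#{p : V × V | p.1 ≠ p.2 ∧ (x p.1, x p.2) ∈ Z p} : ℝ) ≤
      ∑ p, ((ν p.1).prod (ν p.2)).real (Z p) := by
  have hpair : ∀ p ∈ univ.filter fun p : V × V ↦ p.1 ≠ p.2,
      MeasurePreserving (fun x : V → K ↦ (x p.1, x p.2)) (.pi ν) ((ν p.1).prod (ν p.2)) :=
    fun p hp ↦ measurePreserving_eval_pair ν (mem_filter.1 hp).2
  have hint : ∀ p ∈ univ.filter fun p : V × V ↦ p.1 ≠ p.2,
      Integrable (fun x : V → K ↦ (Z p).indicator (1 : K × K → ℝ) (x p.1, x p.2)) (.pi ν) :=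
    fun p hp ↦ (hpair p hp).integrable_comp_of_integrable ((integrable_const 1).indicator (hZ p))
  have hexpect : ∀ p ∈ univ.filter fun p : V × V ↦ p.1 ≠ p.2,
      ∫ x, (Z p).indicator (1 : K × K → ℝ) (x p.1, x p.2) ∂Measure.pi ν =
        ((ν p.1).prod (ν p.2)).real (Z p) := fun p hp ↦ by
    rw [← integral_indicator_one (hZ p), ← (hpair p hp).map_eq]
    exact (integral_map (hpair p hp).aemeasurable
      (measurable_one.indicator (hZ p)).aestronglyMeasurable).symm
  obtain ⟨x, hx, hle⟩ := exists_notMem_null_le_integral (integrable_finsetSum _ hint)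
    (ae_iff.1 hP)
  rw [integral_finsetSum _ hint, sum_congr rfl hexpect] at hle
  refine ⟨x, not_not.1 hx, le_trans (le_of_eq ?_) (hle.trans ?_)⟩
  · rw [← filter_filter, card_filter]
    push_cast
    rfl
  · exact sum_le_sum_of_subset_of_nonneg (filter_subset _ _) fun _ _ _ ↦ measureReal_nonneg

/-- The colouring `c` contains no copy of the pattern `(E, h)`: no injection into `V` gives every
pair `q ∈ E` the colour `h q`. -/
def PatternFree {ι V C : Type*} (E : Finset (ι × ι)) (h : ι × ι → C) (c : V × V → C) : Prop :=
  ∀ ⦃f : ι → V⦄, Injective f → ∃ q ∈ E, c (f q.1, f q.2) ≠ h q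

section Recoloring

variable {V K C : Type*} [MeasurableSpace K] [MeasurableSpace C] [MeasurableSingletonClass C]
  (κ : Kernel (K × K) C) [IsMarkovKernel κ]

lemma exists_recoloring_colorProb_pos [Finite C] (c : V × V → C) (x : V → K) :
    ∃ c' : V × V → C,
      (∀ p, c' p ≠ c p → p.1 ≠ p.2 ∧ colorProb κ (c p) (x p.1, x p.2) = 0) ∧
      ∀ p, p.1 ≠ p.2 → 0 < colorProb κ (c' p) (x p.1, x p.2) := by
  choose g hg using exists_colorProb_pos κ
  have hzero (p : V × V) (hp : ¬0 < colorProb κ (c p) (x p.1, x p.2)) :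
      colorProb κ (c p) (x p.1, x p.2) = 0 := le_antisymm (not_lt.1 hp) (colorProb_mem_Icc κ _ _).1
  refine ⟨fun p ↦ if p.1 = p.2 ∨ 0 < colorProb κ (c p) (x p.1, x p.2) then c p
    else g (x p.1, x p.2), fun p hp ↦ ?_, fun p hp ↦ ?_⟩
  · have hcond := mt (fun h ↦ if_pos h) hp
    exact ⟨fun h ↦ hcond (.inl h), hzero p fun h ↦ hcond (.inr h)⟩
  · dsimp only
    split_ifs with hcond
    · exact hcond.resolve_left hp
    · exact hg _

lemma ae_prod_colorProb_eq_zero {ι : Type*} [Fintype ι] {μ : Measure K} [IsProbabilityMeasure μ]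
    {E : Finset (ι × ι)} {h : ι × ι → C} (hzero : limitDensity μ κ E h = 0) :
    ∀ᵐ x ∂Measure.pi fun _ ↦ μ, ∏ q ∈ E, colorProb κ (h q) (x q.1, x q.2) = 0 := by
  have hmem (x : ι → K) : ∏ q ∈ E, colorProb κ (h q) (x q.1, x q.2) ∈ Set.Icc 0 1 :=
    prod_mem_Icc fun q _ ↦ colorProb_mem_Icc κ _ _
  have hmeas : Measurable fun x : ι → K ↦ ∏ q ∈ E, colorProb κ (h q) (x q.1, x q.2) :=
    Finset.measurable_prod _ fun q _ ↦ (measurable_colorProb κ (h q)).comp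
      ((measurable_pi_apply q.1).prodMk (measurable_pi_apply q.2))
  exact (integral_eq_zero_iff_of_nonneg (fun x ↦ (hmem x).1)
    (.of_mem_Icc 0 1 hmeas.aemeasurable (ae_of_all _ hmem))).1 hzero

lemma ae_cond_prod_colorProb_eq_zero {ι : Type*} [Fintype ι] [Fintype V] {μ : Measure K}
    [IsProbabilityMeasure μ] {s : V → Set K} (hs : ∀ v, MeasurableSet (s v))
    (h0 : ∀ v, μ (s v) ≠ 0) {E : Finset (ι × ι)} {h : ι × ι → C}
    (hzero : limitDensity μ κ E h = 0) {f : ι → V} (hf : Injective f) :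
    ∀ᵐ x ∂Measure.pi fun v ↦ μ[|s v],
      ∏ q ∈ E, colorProb κ (h q) (x (f q.1), x (f q.2)) = 0 := by
  have := fun v ↦ cond_isProbabilityMeasure (h0 v)
  exact (measurePreserving_comp_injective (fun v ↦ μ[|s v]) hf).quasiMeasurePreserving.ae
    ((pi_cond_absolutelyContinuous μ (fun a ↦ hs (f a)) fun a ↦ h0 (f a)).ae_le
      (ae_prod_colorProb_eq_zero κ hzero))

-- Resample the limit point of each vertex `v` in `s v`, and replace the colours that have
-- probability zero at the sampled points.
lemma exists_patternFree_card_le [Fintype V] [Finite C] [DecidableEq C] (μ : Measure K)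
    [IsProbabilityMeasure μ] (c : V × V → C) {s : V → Set K} (hs : ∀ v, MeasurableSet (s v))
    (h0 : ∀ v, μ (s v) ≠ 0) :
    ∃ c' : V × V → C,
      (#{p | c' p ≠ c p} : ℝ) ≤
        ∑ p : V × V, (μ[|s p.1].prod μ[|s p.2]).real {z | colorProb κ (c p) z = 0} ∧
      ∀ {k : ℕ} {E : Finset (Fin k × Fin k)} {h : Fin k × Fin k → C}, (∀ q ∈ E, q.1 ≠ q.2) →
        limitDensity μ κ E h = 0 → PatternFree E h c' := by
  have := fun v ↦ cond_isProbabilityMeasure (h0 v)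
  have hvanish : ∀ᵐ x ∂Measure.pi fun v ↦ μ[|s v], ∀ (k : ℕ) (E : Finset (Fin k × Fin k))
      (h : Fin k × Fin k → C) (f : Fin k → V), limitDensity μ κ E h = 0 → Injective f →
        ∏ q ∈ E, colorProb κ (h q) (x (f q.1), x (f q.2)) = 0 := by
    simp only [ae_all_iff]
    exact fun k E h f hzero hf ↦ ae_cond_prod_colorProb_eq_zero κ hs h0 hzero hf
  obtain ⟨x, hx, hcard⟩ := exists_card_filter_mem_le (fun v ↦ μ[|s v])
    (fun p ↦ measurable_colorProb κ (c p) (measurableSet_singleton 0)) hvanish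
  obtain ⟨c', hedit, hpos⟩ := exists_recoloring_colorProb_pos κ c x
  refine ⟨c', hcard.trans' ?_, fun {k E h} hE hzero f hf ↦ ?_⟩
  · exact_mod_cast card_le_card (monotone_filter_right _ fun p _ hp ↦ hedit p hp)
  · by_contra! hcolor
    refine (prod_pos fun q hq ↦ ?_).ne' (hx k E h f hzero hf)
    exact hcolor q hq ▸ hpos (f q.1, f q.2) (hf.ne (hE q hq))

end Recoloring

section CellRecoloring

variable {Q C : Type*} [MeasurableSpace Q] [MeasurableSpace C]

/-- The set of points of level-`t` label `l`, or the whole space if that set is null, so that one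
can always condition on it. -/
noncomputable def cell (μ : Measure (ℕ → Q)) (t : ℕ) (l : Fin t → Q) : Set (ℕ → Q) :=
  if μ (trunc t ⁻¹' {l}) = 0 then Set.univ else trunc t ⁻¹' {l}

/-- The probability that the colour `h` has probability zero at a random pair of points of the
cells `b.1` and `b.2`. -/
noncomputable def cellZeroProb (μ : Measure (ℕ → Q)) (κ : Kernel ((ℕ → Q) × (ℕ → Q)) C) (t : ℕ)
    (h : C) (b : (Fin t → Q) × (Fin t → Q)) : ℝ :=
  (μ[|cell μ t b.1].prod μ[|cell μ t b.2]).real {z | colorProb κ h z = 0}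

variable (μ : Measure (ℕ → Q))

lemma measure_cell_ne_zero [NeZero μ] (t : ℕ) (l : Fin t → Q) : μ (cell μ t l) ≠ 0 := by
  unfold cell
  split_ifs with h
  · exact NeZero.ne _
  · exact h

lemma measurableSet_cell [Finite Q] [DiscreteMeasurableSpace Q] (t : ℕ) (l : Fin t → Q) :
    MeasurableSet (cell μ t l) := by
  unfold cell
  split_ifs
  · exact .univ
  · exact measurable_trunc t .of_discrete

variable [IsProbabilityMeasure μ] (κ : Kernel ((ℕ → Q) × (ℕ → Q)) C)

lemma cellZeroProb_mem_Icc (t : ℕ) (h : C) (b : (Fin t → Q) × (Fin t → Q)) :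
    cellZeroProb μ κ t h b ∈ Set.Icc 0 1 := by
  have := fun l ↦ cond_isProbabilityMeasure (measure_cell_ne_zero μ t l)
  exact ⟨measureReal_nonneg, measureReal_le_one⟩

variable [DiscreteMeasurableSpace C]

lemma cellZeroProb_eq_setAverage {t : ℕ} (h : C) {b : (Fin t → Q) × (Fin t → Q)}
    (hb : μ.prod μ (pairTrunc t ⁻¹' {b}) ≠ 0) : cellZeroProb μ κ t h b =
      ⨍ p in pairTrunc t ⁻¹' {b}, {z | colorProb κ h z = 0}.indicator 1 p ∂μ.prod μ := by
  have hpre : pairTrunc t ⁻¹' {b} = (trunc t ⁻¹' {b.1}) ×ˢ (trunc t ⁻¹' {b.2}) := by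
    ext p
    simp [pairTrunc, Prod.ext_iff]
  have hmeas : MeasurableSet {z | colorProb κ h z = 0} :=
    measurable_colorProb κ h (measurableSet_singleton 0)
  rw [hpre, Measure.prod_prod, mul_ne_zero_iff] at hb
  rw [cellZeroProb, cell, cell, if_neg hb.1, if_neg hb.2, setAverage_eq, hpre,
    integral_indicator_one hmeas, ProbabilityTheory.cond, ProbabilityTheory.cond,
    Measure.prod_smul_left, Measure.prod_smul_right, Measure.prod_restrict]
  simp only [measureReal_def, Measure.smul_apply, Measure.prod_prod, smul_eq_mul,
    ENNReal.toReal_mul, ENNReal.toReal_inv, mul_inv, mul_assoc]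

variable [Finite Q] [DiscreteMeasurableSpace Q]

lemma tendsto_integral_cellZeroProb_mul_colorProb [IsMarkovKernel κ] (h : C) :
    Tendsto (fun t ↦ ∫ p, cellZeroProb μ κ t h (pairTrunc t p) * colorProb κ h p ∂μ.prod μ)
      atTop (𝓝 0) := by
  have hmeas : MeasurableSet {z | colorProb κ h z = 0} :=
    measurable_colorProb κ h (measurableSet_singleton 0)
  have hzero : ∫ p, {z | colorProb κ h z = 0}.indicator 1 p * colorProb κ h p ∂μ.prod μ = 0 :=
    integral_eq_zero_of_ae <| ae_of_all _ fun p ↦ by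
      by_cases hp : colorProb κ h p = 0 <;> simp [hp]
  rw [← hzero]
  have hconv := ae_tendsto_setAverage_fiber (ν := μ.prod μ)
    (fun _ _ ↦ pairTrunc_factorsThrough) iSup_comap_pairTrunc (measurable_one.indicator hmeas)
    ((integrable_const (1 : ℝ)).indicator hmeas)
  have hfiber : ∀ᵐ p ∂μ.prod μ, ∀ t, μ.prod μ (pairTrunc t ⁻¹' {pairTrunc t p}) ≠ 0 :=
    ae_all_iff.2 fun t ↦ ae_measure_fiber_ne_zero (pairTrunc t)
  refine tendsto_integral_of_dominated_convergence 1 (fun t ↦ ?_) (integrable_const 1)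
    (fun t ↦ ae_of_all _ fun p ↦ ?_) ?_
  · exact (((Measurable.of_discrete (f := cellZeroProb μ κ t h)).comp
      (measurable_pairTrunc t)).mul (measurable_colorProb κ h)).aestronglyMeasurable
  · have hmem := unitInterval.mul_mem (cellZeroProb_mem_Icc μ κ t h (pairTrunc t p))
      (colorProb_mem_Icc κ h p)
    rw [Real.norm_of_nonneg hmem.1]
    exact hmem.2
  · filter_upwards [hconv, hfiber] with p hp hpfiber
    refine Tendsto.mul_const _ (hp.congr fun t ↦ ?_)
    exact (cellZeroProb_eq_setAverage μ κ h (hpfiber t)).symm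

end CellRecoloring

namespace IsColorLimit

variable {I : Type*} {𝒰 : Filter I} {V : I → Type*} [∀ m, Fintype (V m)] {C Q : Type*}
  [MeasurableSpace C] [Finite C] [TopologicalSpace C] [DiscreteTopology C]
  [DiscreteMeasurableSpace C] [Finite Q] [MeasurableSpace Q] [TopologicalSpace Q]
  [DiscreteTopology Q] [DiscreteMeasurableSpace Q]
  {φ : ∀ m, V m → ℕ → Q} {c : ∀ m, V m × V m → C} {μ : Measure (ℕ → Q)}
  {κ : Kernel ((ℕ → Q) × (ℕ → Q)) C} [IsProbabilityMeasure μ] [IsMarkovKernel κ]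

lemma tendsto_expect_cellZeroProb [Fintype C] (hlim : IsColorLimit 𝒰 φ c μ κ) (t : ℕ) :
    Tendsto (fun m ↦ 𝔼 p, cellZeroProb μ κ t (c m p) (pairTrunc t (Prod.map (φ m) (φ m) p))) 𝒰
      (𝓝 (∑ h, ∫ p, cellZeroProb μ κ t h (pairTrunc t p) * colorProb κ h p ∂μ.prod μ)) := by
  refine (tendsto_finsetSum univ fun h _ ↦ hlim.tendsto_color
    (F := fun p ↦ cellZeroProb μ κ t h (pairTrunc t p)) ?_ h).congr fun m ↦ ?_
  · exact (continuous_of_discreteTopology (f := cellZeroProb μ κ t h)).comp (continuous_pairTrunc t)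
  · rw [← expect_sum_comm]
    simp [fiberIndicator]

theorem eventually_exists_patternFree [DecidableEq C] (hlim : IsColorLimit 𝒰 φ c μ κ) {ε : ℝ}
    (hε : 0 < ε) :
    ∀ᶠ m in 𝒰, ∃ c' : V m × V m → C, #{p | c' p ≠ c m p} ≤ ε * Fintype.card (V m) ^ 2 ∧
      ∀ {k : ℕ} {E : Finset (Fin k × Fin k)} {h : Fin k × Fin k → C}, (∀ q ∈ E, q.1 ≠ q.2) →
        limitDensity μ κ E h = 0 → PatternFree E h c' := by
  have := Fintype.ofFinite C
  have hcells := tendsto_finsetSum univ fun h (_ : h ∈ univ) ↦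
    tendsto_integral_cellZeroProb_mul_colorProb μ κ h
  rw [sum_const_zero] at hcells
  obtain ⟨t, ht⟩ := (hcells.eventually_lt_const hε).exists
  filter_upwards [(hlim.tendsto_expect_cellZeroProb t).eventually_lt_const ht] with m hm
  obtain ⟨c', hcard, hfree⟩ := exists_patternFree_card_le κ μ (c m)
    (fun v ↦ measurableSet_cell μ t (trunc t (φ m v)))
    fun v ↦ measure_cell_ne_zero μ t (trunc t (φ m v))
  refine ⟨c', hcard.trans ?_, hfree⟩
  calc _ = (Fintype.card (V m × V m) : ℝ) * _ := (Fintype.card_mul_expect _).symm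
    _ ≤ Fintype.card (V m × V m) * ε := mul_le_mul_of_nonneg_left hm.le (Nat.cast_nonneg _)
    _ = ε * Fintype.card (V m) ^ 2 := by rw [Fintype.card_prod]; push_cast; ring

end IsColorLimit

theorem eventually_exists_patternFree_of_tendsto_homDensity {I C : Type*} {V : I → Type*}
    [∀ m, Fintype (V m)] [∀ m, Nonempty (V m)] [Finite C] [DecidableEq C]
    (𝒰 : Ultrafilter I) (c : ∀ m, V m × V m → C) {ε : ℝ} (hε : 0 < ε) :
    ∀ᶠ m in 𝒰, ∃ c' : V m × V m → C, #{p | c' p ≠ c m p} ≤ ε * Fintype.card (V m) ^ 2 ∧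
      ∀ {k : ℕ} {E : Finset (Fin k × Fin k)} {h : Fin k × Fin k → C},
        IsOriented (fun a b ↦ (a, b) ∈ E) →
        Tendsto (fun m ↦ homDensity E fun q ↦ fiberIndicator (c m) (h q)) 𝒰 (𝓝 0) →
        PatternFree E h c' := by
  let : TopologicalSpace C := ⊥
  have : DiscreteTopology C := ⟨rfl⟩
  let : MeasurableSpace C := ⊤
  have : DiscreteMeasurableSpace C := ⟨fun _ ↦ trivial⟩
  obtain ⟨m₀⟩ := 𝒰.neBot.nonempty
  have : Nonempty C := ⟨c m₀ (Classical.arbitrary _)⟩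
  have : BorelSpace (ℕ → C → Bool × Bool) := Pi.borelSpace
  obtain ⟨φ, hφ⟩ := exists_eventually_cutNorm_sub_levelAvg_lt 𝒰
    (f := fun m ↦ fiberIndicator (c m)) fun m ↦ fiberIndicator_mem_Icc (c m)
  obtain ⟨μ, κ, _, _, hlim⟩ := exists_isColorLimit 𝒰 φ c
  filter_upwards [hlim.eventually_exists_patternFree hε] with m ⟨c', hcard, hfree⟩
  refine ⟨c', hcard, fun hE hzero ↦ hfree (fun q ↦ ne_of_isOriented hE) ?_⟩
  exact tendsto_nhds_unique (hlim.tendsto_homDensity hφ hE _) hzero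

section ArcSign

variable {V W : Type*}

/-- The colouring of ordered pairs that encodes an oriented graph: an arc is coloured `1` in its
own direction and `-1` in the reverse direction, and a non-adjacent pair is coloured `0`. -/
noncomputable def arcSign (A : V → V → Prop) (p : V × V) : SignType :=
  if A p.1 p.2 then 1 else if A p.2 p.1 then -1 else 0

lemma arcSign_eq_arcSign_iff {A : V → V → Prop} {H : W → W → Prop} (hA : IsOriented A)
    (hH : IsOriented H) {p : V × V} {q : W × W} :
    arcSign A p = arcSign H q ↔ (A p.1 p.2 ↔ H q.1 q.2) ∧ (A p.2 p.1 ↔ H q.2 q.1) := by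
  have hp := hA p.1 p.2
  have hq := hH q.1 q.2
  unfold arcSign
  split_ifs <;> simp_all

/-- The oriented graph encoded by a colouring, read off from the increasing pairs only: the
colourings of `(u, v)` and `(v, u)` need not be opposite. -/
def ofArcSign [LinearOrder V] (c : V × V → SignType) (u v : V) : Prop :=
  u < v ∧ c (u, v) = 1 ∨ v < u ∧ c (v, u) = -1

variable [LinearOrder V] {c : V × V → SignType}

lemma isOriented_ofArcSign : IsOriented (ofArcSign c) := by
  rintro u v (⟨huv, h⟩ | ⟨huv, h⟩) (⟨hvu, h'⟩ | ⟨hvu, h'⟩)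
  · exact lt_asymm huv hvu
  · exact absurd (h.symm.trans h') (by decide)
  · exact absurd (h.symm.trans h') (by decide)
  · exact lt_asymm huv hvu

lemma arcSign_ofArcSign {u v : V} (huv : u < v) : arcSign (ofArcSign c) (u, v) = c (u, v) := by
  simp only [arcSign, ofArcSign, huv, huv.not_gt, true_and, false_and, or_false, false_or]
  cases c (u, v) <;> simp

lemma pairDiff_ofArcSign_le [Fintype V] {A : V → V → Prop} (hA : IsOriented A) :
    pairDiff A (ofArcSign c) ≤ #{p | c p ≠ arcSign A p} := by
  refine card_le_card fun p hp ↦ ?_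
  obtain ⟨hlt, hdiff⟩ := (mem_filter.1 hp).2
  refine mem_filter.2 ⟨mem_univ p, fun hc ↦ hdiff ?_⟩
  exact (arcSign_eq_arcSign_iff hA isOriented_ofArcSign).1 ((arcSign_ofArcSign hlt).trans hc).symm

lemma numCopies_ofArcSign_eq_zero [Fintype V] [Finite W] {H : W → W → Prop} (hH : IsOriented H)
    (hfree : ∀ E : Finset (W × W), IsOriented (fun a b ↦ (a, b) ∈ E) →
      (Pairwise fun a b ↦ (a, b) ∈ E ∨ (b, a) ∈ E) → PatternFree E (arcSign H) c) :
    numCopies H (ofArcSign c) = 0 := by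
  have := Fintype.ofFinite W
  refine card_eq_zero.2 (filter_eq_empty_iff.2 ?_)
  rintro S - ⟨f, hf, -, hcopy⟩
  obtain ⟨q, hq, hne⟩ := hfree {q | f q.1 < f q.2} (fun a b ↦ by simpa using le_of_lt)
    (fun a b hab ↦ by simpa using hf.ne hab) hf
  refine hne ?_
  rw [← arcSign_ofArcSign (c := c) (mem_filter.1 hq).2]
  exact (arcSign_eq_arcSign_iff isOriented_ofArcSign hH).2 ⟨hcopy _ _, hcopy _ _⟩

end ArcSign

section Counting

variable {V W : Type*} {A : V → V → Prop} {H : W → W → Prop}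

/-- `v` embeds the oriented graph `H` into `A` as an induced subgraph; this is the labelled
version of `IsInducedCopy`. -/
def IsInducedEmbedding (H : W → W → Prop) (A : V → V → Prop) (v : W → V) : Prop :=
  Injective v ∧ ∀ a b, A (v a) (v b) ↔ H a b

variable {E : Finset (W × W)}

lemma prod_fiberIndicator_arcSign_le (hA : IsOriented A) (hH : IsOriented H)
    (hE : Pairwise fun a b ↦ (a, b) ∈ E ∨ (b, a) ∈ E) (v : W → V) :
    ∏ q ∈ E, fiberIndicator (arcSign A) (arcSign H q) (v q.1, v q.2) ≤
      ∑ q ∈ E, (if v q.1 = v q.2 then 1 else 0) +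
        if IsInducedEmbedding H A v then 1 else 0 := by
  have hprod := prod_mem_Icc (s := E) fun q _ ↦
    fiberIndicator_mem_Icc (arcSign A) (arcSign H q) (v q.1, v q.2)
  have hsum (q : W × W) : (0 : ℝ) ≤ if v q.1 = v q.2 then 1 else 0 := by positivity
  by_cases hmatch : ∀ q ∈ E, arcSign A (v q.1, v q.2) = arcSign H q
  · by_cases hv : Injective v
    · have hembed (a b : W) : A (v a) (v b) ↔ H a b := by
        rcases eq_or_ne a b with rfl | hab
        · exact iff_of_false (fun h ↦ hA _ _ h h) fun h ↦ hH _ _ h h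
        rcases hE hab with hq | hq
        · exact ((arcSign_eq_arcSign_iff hA hH).1 (hmatch _ hq)).1
        · exact ((arcSign_eq_arcSign_iff hA hH).1 (hmatch _ hq)).2
      rw [if_pos ⟨hv, hembed⟩]
      exact hprod.2.trans (le_add_of_nonneg_left (sum_nonneg fun q _ ↦ hsum q))
    · obtain ⟨a, b, hvab, hab⟩ := not_injective_iff.1 hv
      obtain ⟨q, hq, hvq⟩ : ∃ q ∈ E, v q.1 = v q.2 :=
        (hE hab).elim (⟨_, ·, hvab⟩) (⟨_, ·, hvab.symm⟩)
      refine (hprod.2.trans ?_).trans (le_add_of_nonneg_right (by positivity))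
      simpa [hvq] using single_le_sum (fun q _ ↦ hsum q) hq
  · push Not at hmatch
    obtain ⟨q, hq, hne⟩ := hmatch
    rw [prod_eq_zero hq (if_neg hne)]
    exact add_nonneg (sum_nonneg fun q _ ↦ hsum q) (by positivity)

variable [Fintype W] [DecidableEq W]

lemma card_isInducedEmbedding_le [Fintype V] [DecidableEq V] :
    #{v : W → V | IsInducedEmbedding H A v} ≤
      Fintype.card W ^ Fintype.card W * numCopies H A := by
  refine card_le_mul_card_image_of_maps_to (f := fun v ↦ univ.image v)
    (fun v hv ↦ ?_) _ fun S hS ↦ ?_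
  · obtain ⟨hinj, hv⟩ := (mem_filter.1 hv).2
    exact mem_filter.2 ⟨mem_univ _, v, hinj, by simp, hv⟩
  · obtain ⟨f, hf, hfS, -⟩ := (mem_filter.1 hS).2
    have hcard : #S = Fintype.card W := by
      rw [show S = univ.image f by ext; simp [hfS], card_image_of_injective _ hf, card_univ]
    calc _ ≤ #(Fintype.piFinset fun _ : W ↦ S) := by
          refine card_le_card fun v hv ↦ Fintype.mem_piFinset.2 fun a ↦ ?_
          rw [← (mem_filter.1 hv).2]
          exact mem_image_of_mem v (mem_univ a)
      _ = _ := by simp [hcard]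

lemma expect_ite_apply_eq_apply [Fintype V] [Nonempty V] {a b : W} (hab : a ≠ b) :
    𝔼 v : W → V, (if v a = v b then 1 else 0 : ℝ) = (Fintype.card V : ℝ)⁻¹ := by
  rw [← expect_update a]
  simp [update_of_ne hab.symm, expect_eq_sum_div_card]

lemma homDensity_arcSign_le [Fintype V] [DecidableEq V] [Nonempty V] (hA : IsOriented A)
    (hH : IsOriented H) (hE : IsOriented fun a b ↦ (a, b) ∈ E)
    (hE' : Pairwise fun a b ↦ (a, b) ∈ E ∨ (b, a) ∈ E) :
    homDensity E (fun q ↦ fiberIndicator (arcSign A) (arcSign H q)) ≤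
      #E * (Fintype.card V : ℝ)⁻¹ + Fintype.card W ^ Fintype.card W *
        (numCopies H A / Fintype.card V ^ Fintype.card W) := by
  refine (expect_le_expect fun v _ ↦ prod_fiberIndicator_arcSign_le hA hH hE' v).trans ?_
  rw [expect_add_distrib, expect_sum_comm,
    sum_congr rfl fun q hq ↦ expect_ite_apply_eq_apply (ne_of_isOriented hE hq), sum_const,
    nsmul_eq_mul, expect_eq_sum_div_card, sum_boole, ← mul_div_assoc]
  simp only [card_univ, Fintype.card_fun, Nat.cast_pow]
  gcongr
  exact_mod_cast card_isInducedEmbedding_le (A := A) (H := H)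

end Counting

section Removal

variable {I : Type*} {V : I → Type*} [∀ m, Fintype (V m)] {A : ∀ m, V m → V m → Prop}

lemma tendsto_homDensity_arcSign [∀ m, DecidableEq (V m)] [∀ m, Nonempty (V m)] {W : Type*}
    [Fintype W] [DecidableEq W] {𝒰 : Filter I} (hV : Tendsto (fun m ↦ Fintype.card (V m)) 𝒰 atTop)
    (hA : ∀ m, IsOriented (A m)) {H : W → W → Prop} (hH : IsOriented H)
    (hcopies : Tendsto (fun m ↦ (numCopies H (A m) / Fintype.card (V m) ^ Fintype.card W : ℝ)) 𝒰
      (𝓝 0)) {E : Finset (W × W)} (hE : IsOriented fun a b ↦ (a, b) ∈ E)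
    (hE' : Pairwise fun a b ↦ (a, b) ∈ E ∨ (b, a) ∈ E) :
    Tendsto (fun m ↦ homDensity E fun q ↦ fiberIndicator (arcSign (A m)) (arcSign H q)) 𝒰
      (𝓝 0) := by
  have hbound := ((tendsto_inv_atTop_nhds_zero_nat (𝕜 := ℝ)).comp hV).const_mul (#E : ℝ) |>.add
    (hcopies.const_mul ((Fintype.card W : ℝ) ^ Fintype.card W))
  simp only [mul_zero, add_zero] at hbound
  exact squeeze_zero
    (fun m ↦ expect_nonneg fun v _ ↦ prod_nonneg fun q _ ↦ (fiberIndicator_mem_Icc _ _ _).1)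
    (fun m ↦ homDensity_arcSign_le (hA m) hH hE hE') hbound

theorem eventually_exists_numCopies_eq_zero [∀ m, LinearOrder (V m)] [∀ m, Nonempty (V m)]
    (𝒰 : Ultrafilter I) (hV : Tendsto (fun m ↦ Fintype.card (V m)) 𝒰 atTop)
    (hA : ∀ m, IsOriented (A m)) {ε : ℝ} (hε : 0 < ε) :
    ∀ᶠ m in 𝒰, ∃ B : V m → V m → Prop, IsOriented B ∧
      (∀ {k : ℕ} {H : Fin k → Fin k → Prop}, IsOriented H →
        Tendsto (fun m ↦ (numCopies H (A m) / Fintype.card (V m) ^ k : ℝ)) 𝒰 (𝓝 0) →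
        numCopies H B = 0) ∧
      pairDiff (A m) B ≤ ε * Fintype.card (V m) ^ 2 := by
  filter_upwards [eventually_exists_patternFree_of_tendsto_homDensity 𝒰
    (fun m ↦ arcSign (A m)) hε] with m ⟨c', hcard, hfree⟩
  refine ⟨ofArcSign c', isOriented_ofArcSign, fun hH hcopies ↦ ?_,
    (Nat.cast_le.2 (pairDiff_ofArcSign_le (hA m))).trans hcard⟩
  exact numCopies_ofArcSign_eq_zero hH fun E hE hE' ↦
    hfree hE (tendsto_homDensity_arcSign hV hA hH (by simpa using hcopies) hE hE')

end Removal

end InducedRemoval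

/-- **infinite induced oriented graph removal lemma.** Let `F` be a
(possibly infinite) family of oriented graphs `H i` on `k i` vertices. For every
`ε_R > 0` there are `n₀` and `δ > 0` such that every oriented graph on `n ≥ n₀`
vertices containing at most `δ n^{k i}` induced copies of each `H i` can be made
induced `H i`-free for all `i` by changing at most `ε_R n²` pairs of vertices. -/
theorem induced_removal_lemma {ι : Type*} (k : ι → ℕ)
    (H : ∀ i : ι, Fin (k i) → Fin (k i) → Prop) (hH : ∀ i, IsOriented (H i)) :
    ∀ εR : ℝ, 0 < εR → ∃ (n₀ : ℕ) (δ : ℝ), 0 < δ ∧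
      ∀ n : ℕ, n₀ ≤ n → ∀ A : Fin n → Fin n → Prop, IsOriented A →
        (∀ i : ι, (numCopies (H i) A : ℝ) ≤ δ * (n : ℝ) ^ (k i)) →
        ∃ B : Fin n → Fin n → Prop, IsOriented B ∧ (∀ i : ι, numCopies (H i) B = 0) ∧
          (pairDiff A B : ℝ) ≤ εR * (n : ℝ) ^ 2 := by
  intro εR hε
  by_contra! hcounter
  choose N hN A hA hcopies hbad using fun m : ℕ ↦
    hcounter (m + 1) (1 / (m + 1)) Nat.one_div_pos_of_nat
  have (m : ℕ) : NeZero (N m) := ⟨(Nat.succ_pos m |>.trans_le (hN m)).ne'⟩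
  have hcard : Filter.Tendsto (fun m ↦ Fintype.card (Fin (N m))) .atTop .atTop := by
    simpa using Filter.tendsto_atTop_mono (fun m ↦ (Nat.le_succ m).trans (hN m)) Filter.tendsto_id
  obtain ⟨m, B, hB, hfree, hdiff⟩ := (InducedRemoval.eventually_exists_numCopies_eq_zero
    (Filter.hyperfilter ℕ) (hcard.mono_left Nat.hyperfilter_le_atTop) hA hε).exists
  rw [Fintype.card_fin] at hdiff
  refine (hbad m B hB fun i ↦ hfree (hH i) ?_).not_ge hdiff
  refine squeeze_zero (fun m ↦ by positivity) (fun m ↦ ?_)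
    (tendsto_one_div_add_atTop_nhds_zero_nat.mono_left Nat.hyperfilter_le_atTop)
  have hN_pos : 0 < N m := Nat.pos_of_neZero _
  rw [Fintype.card_fin, div_le_iff₀ (by positivity)]
  exact hcopies m i
end

section
/- For every δ > 0 there exist n₀ and ε' > 0 such that every T⃗₃-free oriented graph G of order n ≥ n₀ with induced-P⃗₄ density d_{P⃗₄}(G) ≥ 24/125 − ε' contains at most δ n³ directed triangles (copies of the directed 3-cycle C⃗₃). -/
open scoped Classical

/-- The arc relation of the directed 3-cycle `C⃗₃` on `Fin 3`. -/
def C3rel : Fin 3 → Fin 3 → Prop := fun a b => b = a + 1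

/-! The proof is a sum-of-squares certificate of flag algebra type. Let `P` and `T` be the numbers
of ordered induced copies of `P⃗₄` and `C⃗₃`, and attach to every arc and to every nonadjacent pair
of vertices a sum of squares of linear expressions in degrees and codegrees, all of which vanish on
the balanced blow-up of `C⃗₅`. Written as a sum over quadruples of vertices, `4 n⁴ - 500 P - 20 n T`
minus all these squares becomes termwise nonnegative once each quadruple is averaged over its `24`
orderings, which is a statement about the finitely many `T⃗₃`-free oriented graphs on four vertices;
repeated vertices cause no exception, since they behave like nonadjacent twins. Hence
`125 P + 5 n T ≤ n⁴`, and a graph whose `P⃗₄`-density is at least `24 / 125 - ε = 4! / 125 - ε` has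
only `O(ε n³ + n²)` directed triangles. -/

section Counting

theorem pow_succ_le_descFactorial_add (n k : ℕ) :
    n ^ (k + 1) ≤ n.descFactorial (k + 1) + (k + 1).choose 2 * n ^ k := by
  induction k with
  | zero => simp
  | succ k ih =>
    have hsplit : n * n.descFactorial (k + 1) ≤
        n.descFactorial (k + 2) + (k + 1) * n ^ (k + 1) := calc
      n * n.descFactorial (k + 1)
          ≤ (n - (k + 1) + (k + 1)) * n.descFactorial (k + 1) := by gcongr; omega
      _ = n.descFactorial (k + 2) + (k + 1) * n.descFactorial (k + 1) := by
          rw [add_mul, Nat.descFactorial_succ n (k + 1)]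
      _ ≤ n.descFactorial (k + 2) + (k + 1) * n ^ (k + 1) := by
          gcongr; exact Nat.descFactorial_le_pow n (k + 1)
    have hchoose : (k + 2).choose 2 = (k + 1) + (k + 1).choose 2 := by
      rw [Nat.choose_succ_succ' (k + 1) 1, Nat.choose_one_right]
    calc n ^ (k + 2) = n * n ^ (k + 1) := pow_succ' n (k + 1)
      _ ≤ n * (n.descFactorial (k + 1) + (k + 1).choose 2 * n ^ k) := by gcongr
      _ = n * n.descFactorial (k + 1) + (k + 1).choose 2 * n ^ (k + 1) := by ring
      _ ≤ n.descFactorial (k + 2) + (k + 2).choose 2 * n ^ (k + 1) := by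
          rw [hchoose, add_mul]; omega

variable {M ι V W : Type*} [Fintype V]

theorem sum_nonneg_of_sum_perm_nonneg [AddCommGroup M] [LinearOrder M] [IsOrderedAddMonoid M]
    [Fintype ι] [DecidableEq ι] {F : (ι → V) → M}
    (hF : ∀ x, 0 ≤ ∑ σ : Equiv.Perm ι, F (x ∘ σ)) : 0 ≤ ∑ x, F x := by
  have hperm (σ : Equiv.Perm ι) : ∑ x, F (x ∘ σ) = ∑ x, F x :=
    Equiv.sum_comp (σ.symm.arrowCongr (Equiv.refl V)) F
  have hsum : 0 ≤ ∑ σ : Equiv.Perm ι, ∑ x, F (x ∘ σ) := by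
    rw [Finset.sum_comm]
    exact Finset.sum_nonneg fun x _ => hF x
  simp only [hperm, Finset.sum_const] at hsum
  exact (nsmul_nonneg_iff (Finset.card_ne_zero.mpr Finset.univ_nonempty)).mp hsum

theorem sum_fin_succ_pi [AddCommMonoid M] {k : ℕ} (F : (Fin (k + 1) → V) → M) :
    ∑ x, F x = ∑ a, ∑ y, F (Fin.cons a y) := by
  rw [← Equiv.sum_comp (Fin.consEquiv fun _ => V), Fintype.sum_prod_type]
  rfl

theorem sum_fin_three_pi [AddCommMonoid M] (F : V → V → V → M) :
    ∑ x : Fin 3 → V, F (x 0) (x 1) (x 2) = ∑ a, ∑ b, ∑ c, F a b c := by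
  simp only [sum_fin_succ_pi, Fintype.sum_unique]
  rfl

theorem sum_fin_four_pi [AddCommMonoid M] (F : V → V → V → V → M) :
    ∑ x : Fin 4 → V, F (x 0) (x 1) (x 2) (x 3) = ∑ a, ∑ b, ∑ c, ∑ d, F a b c d := by
  rw [sum_fin_succ_pi]
  exact Finset.sum_congr rfl fun a _ => sum_fin_three_pi (F a)

theorem numCopies_le_card_filter [Fintype W] [DecidableEq V] [DecidableEq W]
    (H : W → W → Prop) (A : V → V → Prop) (p : (W → V) → Prop) [DecidablePred p]
    (hp : ∀ f, (∀ a b, A (f a) (f b) ↔ H a b) → p f) :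
    numCopies H A ≤ (Finset.univ.filter p).card := by
  refine (Finset.card_le_card fun S hS => ?_).trans
    (Finset.card_image_le (f := fun g : W → V => Finset.univ.image g))
  obtain ⟨g, -, hrange, hg⟩ := (Finset.mem_filter.mp hS).2
  refine Finset.mem_image.mpr ⟨g, Finset.mem_filter.mpr ⟨Finset.mem_univ g, hp g hg⟩, ?_⟩
  ext v
  simp [hrange]

end Counting

section SumOfSquares

variable {ι R : Type*} [Fintype ι] [Ring R] [LinearOrder R] [IsStrictOrderedRing R]

theorem sum_sum_mul_self_nonneg (f : ι → R) : 0 ≤ ∑ u, ∑ v, f u * f v := by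
  rw [← Finset.sum_mul_sum]
  exact mul_self_nonneg _

theorem sum_sum_const_mul_self_nonneg {c : R} (hc : 0 ≤ c) (f : ι → R) :
    0 ≤ ∑ u, ∑ v, c * (f u * f v) := by
  simp only [← Finset.mul_sum _ _ c]
  exact mul_nonneg hc (sum_sum_mul_self_nonneg f)

end SumOfSquares

section Certificate

variable {V : Type*} (A : V → V → Prop)

/-- `a → b → c → d` is an induced `P⃗₄`. -/
def InducesPath (a b c d : V) : Prop :=
  A a b ∧ A b c ∧ A c d ∧ ¬ (A a c ∨ A c a) ∧ ¬ (A b d ∨ A d b) ∧ ¬ (A a d ∨ A d a)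

/-- `a → b → c → a` is a directed triangle. -/
def InducesTriangle (a b c : V) : Prop :=
  A a b ∧ A b c ∧ A c a

variable [DecidableRel A]

instance (a b c d : V) : Decidable (InducesPath A a b c d) :=
  inferInstanceAs (Decidable (_ ∧ _))

instance (a b c : V) : Decidable (InducesTriangle A a b c) :=
  inferInstanceAs (Decidable (_ ∧ _))

instance [Fintype V] : Decidable (T3Free A) :=
  inferInstanceAs (Decidable (∀ a b c, ¬ (A a b ∧ A b c ∧ A a c)))

/-- The `0`-`1` indicator of the arc `u → v`. -/
def arc (u v : V) : ℤ := if A u v then 1 else 0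

/-- The quadratic form attached to an arc `x → y`, as a kernel in two further vertices `u`, `v`.
Summed over a single vertex, the linear forms squared here become `5 (d⁻(x) + d⁺(y)) - 2 n`,
`d⁻(x) - d⁺(y)`, `d⁺(x) - d⁻(y)` and `d(x) - d(y)`. -/
def arcForm (x y u v : V) : ℤ :=
  let balance (w : V) := 5 * (arc A w x + arc A y w) - 2
  let outer (w : V) := arc A w x - arc A y w
  let inner (w : V) := arc A x w - arc A w y
  2 * (balance u * balance v) + 115 * (outer u * outer v) + 15 * (inner u * inner v)
    + 5 * ((outer u + inner u) * (outer v + inner v))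

/-- The quadratic form attached to a nonadjacent pair `x`, `y`, as a kernel in two further
vertices `u`, `v`. Summed over a single vertex, `common` becomes
`|N⁺(x) ∩ N⁺(y)| - |N⁻(x) ∩ N⁻(y)|`, `union` becomes `|N⁺(x) ∪ N⁺(y)| - |N⁻(x) ∪ N⁻(y)|`, and
`balance` counts a common neighbour with weight `10` if it lies on a directed path between `x`
and `y` and with weight `5` otherwise, minus `2 n`. -/
def nonadjForm (x y u v : V) : ℤ :=
  let balance (w : V) := 5 * (arc A x w * arc A y w + arc A w x * arc A w y)
    + 10 * (arc A x w * arc A w y + arc A w x * arc A y w) - 2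
  let common (w : V) := arc A x w * arc A y w - arc A w x * arc A w y
  let union (w : V) := arc A x w + arc A y w - arc A w x - arc A w y - common w
  balance u * balance v + 10 * (union u * union v) + 5 * (common u * common v)

/-- The form `arcForm` or `nonadjForm` that the pair `x`, `y` calls for; a reversed arc `y → x`
contributes nothing, so that every arc is counted once. -/
def pairForm (x y u v : V) : ℤ :=
  if A x y then arcForm A x y u v else if A y x then 0 else nonadjForm A x y u v

/-- The summand of the sum-of-squares certificate, for which `4 n⁴ = 500 · n⁴ / 125` is the leading
term because a balanced blow-up of `C⃗₅` has `5 (n / 5)⁴` ordered induced copies of `P⃗₄`. -/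
def certificate (a b c d : V) : ℤ :=
  4 - 500 * (if InducesPath A a b c d then 1 else 0)
    - 20 * (if InducesTriangle A b c d then 1 else 0) - pairForm A a b c d

theorem certificate_comp {W : Type*} (f : W → V) (a b c d : W) :
    certificate (fun i j => A (f i) (f j)) a b c d = certificate A (f a) (f b) (f c) (f d) :=
  rfl

variable {A}

theorem sum_arcForm_nonneg [Fintype V] (x y : V) : 0 ≤ ∑ u, ∑ v, arcForm A x y u v := by
  simp only [arcForm, Finset.sum_add_distrib]
  refine add_nonneg (add_nonneg (add_nonneg ?_ ?_) ?_) ?_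
  · exact sum_sum_const_mul_self_nonneg (by norm_num) fun w => 5 * (arc A w x + arc A y w) - 2
  · exact sum_sum_const_mul_self_nonneg (by norm_num) fun w => arc A w x - arc A y w
  · exact sum_sum_const_mul_self_nonneg (by norm_num) fun w => arc A x w - arc A w y
  · exact sum_sum_const_mul_self_nonneg (by norm_num) fun w =>
      arc A w x - arc A y w + (arc A x w - arc A w y)

theorem sum_nonadjForm_nonneg [Fintype V] (x y : V) : 0 ≤ ∑ u, ∑ v, nonadjForm A x y u v := by
  simp only [nonadjForm, Finset.sum_add_distrib]
  refine add_nonneg (add_nonneg (sum_sum_mul_self_nonneg _) ?_) ?_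
  · exact sum_sum_const_mul_self_nonneg (by norm_num) fun w =>
      arc A x w + arc A y w - arc A w x - arc A w y
        - (arc A x w * arc A y w - arc A w x * arc A w y)
  · exact sum_sum_const_mul_self_nonneg (by norm_num) fun w =>
      arc A x w * arc A y w - arc A w x * arc A w y

theorem sum_pairForm_nonneg [Fintype V] (x y : V) : 0 ≤ ∑ u, ∑ v, pairForm A x y u v := by
  unfold pairForm
  split_ifs
  · exact sum_arcForm_nonneg x y
  · simp
  · exact sum_nonadjForm_nonneg x y

end Certificate

section FourVertices

/-- Encodes the way a pair `i`, `j` is joined: `1` for `i → j`, `2` for `j → i`, `0` for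
nonadjacent. -/
def pairState (H : Fin 4 → Fin 4 → Prop) [DecidableRel H] (i j : Fin 4) : Fin 3 :=
  if H i j then 1 else if H j i then 2 else 0

/-- The oriented graph on four vertices with the prescribed states of its six pairs, in the sense
of `pairState`. It is Boolean so that the kernel can evaluate it. -/
def ofPairStates (s₀₁ s₀₂ s₀₃ s₁₂ s₁₃ s₂₃ : Fin 3) (i j : Fin 4) : Bool :=
  match i.val, j.val with
  | 0, 1 => s₀₁ == 1 | 0, 2 => s₀₂ == 1 | 0, 3 => s₀₃ == 1
  | 1, 0 => s₀₁ == 2 | 1, 2 => s₁₂ == 1 | 1, 3 => s₁₃ == 1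
  | 2, 0 => s₀₂ == 2 | 2, 1 => s₁₂ == 2 | 2, 3 => s₂₃ == 1
  | 3, 0 => s₀₃ == 2 | 3, 1 => s₁₃ == 2 | 3, 2 => s₂₃ == 2
  | _, _ => false

set_option maxRecDepth 100000 in
theorem sum_perm_certificate_ofPairStates_nonneg : ∀ s₀₁ s₀₂ s₀₃ s₁₂ s₁₃ s₂₃ : Fin 3,
    T3Free (fun i j => ofPairStates s₀₁ s₀₂ s₀₃ s₁₂ s₁₃ s₂₃ i j = true) →
    0 ≤ ∑ σ : Equiv.Perm (Fin 4),
      certificate (fun i j => ofPairStates s₀₁ s₀₂ s₀₃ s₁₂ s₁₃ s₂₃ i j = true)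
        (σ 0) (σ 1) (σ 2) (σ 3) := by
  decide +kernel

theorem ofPairStates_pairState_iff {H : Fin 4 → Fin 4 → Prop} [DecidableRel H]
    (hH : IsOriented H) (i j : Fin 4) :
    ofPairStates (pairState H 0 1) (pairState H 0 2) (pairState H 0 3) (pairState H 1 2)
      (pairState H 1 3) (pairState H 2 3) i j = true ↔ H i j := by
  have hforward (i j : Fin 4) : pairState H i j = 1 ↔ H i j := by
    unfold pairState; split_ifs <;> simp_all
  have hbackward (i j : Fin 4) : pairState H i j = 2 ↔ H j i := by
    have hasymm := hH i j
    unfold pairState; split_ifs <;> simp_all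
  have hloop (i : Fin 4) : ¬ H i i := fun h => hH i i h h
  fin_cases i <;> fin_cases j <;> simp [ofPairStates, hforward, hbackward, hloop]

theorem sum_perm_certificate_nonneg {H : Fin 4 → Fin 4 → Prop} [DecidableRel H]
    (hH : IsOriented H) (hT : T3Free H) :
    0 ≤ ∑ σ : Equiv.Perm (Fin 4), certificate H (σ 0) (σ 1) (σ 2) (σ 3) := by
  have hcode : H = fun i j => ofPairStates (pairState H 0 1) (pairState H 0 2) (pairState H 0 3)
      (pairState H 1 2) (pairState H 1 3) (pairState H 2 3) i j = true := by
    funext i j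
    exact propext (ofPairStates_pairState_iff hH i j).symm
  convert sum_perm_certificate_ofPairStates_nonneg _ _ _ _ _ _ (hcode ▸ hT)

end FourVertices

section Main

variable {V : Type*} [Fintype V] {A : V → V → Prop}

theorem sum_certificate_nonneg [DecidableRel A] (hA : IsOriented A) (hT : T3Free A) :
    0 ≤ ∑ a, ∑ b, ∑ c, ∑ d, certificate A a b c d := by
  rw [← sum_fin_four_pi]
  refine sum_nonneg_of_sum_perm_nonneg fun x => ?_
  have hor : IsOriented fun i j => A (x i) (x j) := fun i j => hA (x i) (x j)
  have hfree : T3Free fun i j => A (x i) (x j) := fun i j k => hT (x i) (x j) (x k)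
  simpa only [certificate_comp, Function.comp_apply] using sum_perm_certificate_nonneg hor hfree

variable [DecidableEq V]

theorem numPaths_four_le_sum [DecidableRel A] :
    (numPaths A 4 : ℤ) ≤ ∑ a, ∑ b, ∑ c, ∑ d, if InducesPath A a b c d then 1 else 0 := by
  rw [← sum_fin_four_pi, Finset.sum_boole]
  refine Nat.cast_le.mpr (numCopies_le_card_filter (fun i j : Fin 4 => (j : ℕ) = i + 1) A _ ?_)
  intro f hf
  simp [InducesPath, hf]

theorem numCopies_C3rel_le_sum [DecidableRel A] :
    (numCopies C3rel A : ℤ) ≤ ∑ a, ∑ b, ∑ c, if InducesTriangle A a b c then 1 else 0 := by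
  rw [← sum_fin_three_pi, Finset.sum_boole]
  refine Nat.cast_le.mpr (numCopies_le_card_filter C3rel A _ fun f hf => ?_)
  simp [InducesTriangle, hf, C3rel]

theorem numPaths_add_numCopies_C3rel_le (hA : IsOriented A) (hT : T3Free A) :
    125 * numPaths A 4 + 5 * Fintype.card V * numCopies C3rel A ≤ Fintype.card V ^ 4 := by
  have hcert := sum_certificate_nonneg hA hT
  have hforms : 0 ≤ ∑ a, ∑ b, ∑ c, ∑ d, pairForm A a b c d :=
    Finset.sum_nonneg fun a _ => Finset.sum_nonneg fun b _ => sum_pairForm_nonneg a b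
  have hpaths := numPaths_four_le_sum (A := A)
  have htriangles := numCopies_C3rel_le_sum (A := A)
  have htotal : ∑ a, ∑ b, ∑ c, ∑ d, certificate A a b c d =
      4 * (Fintype.card V : ℤ) ^ 4
        - 500 * (∑ a, ∑ b, ∑ c, ∑ d, if InducesPath A a b c d then 1 else 0)
        - 20 * (Fintype.card V * ∑ b, ∑ c, ∑ d, if InducesTriangle A b c d then 1 else 0)
        - ∑ a, ∑ b, ∑ c, ∑ d, pairForm A a b c d := by
    simp only [certificate, Finset.sum_sub_distrib, ← Finset.mul_sum, Finset.sum_const,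
      Finset.card_univ, nsmul_eq_mul]
    ring
  have hscaled := mul_le_mul_of_nonneg_left htriangles (Int.natCast_nonneg (Fintype.card V))
  zify
  linarith

theorem mul_numCopies_C3rel_le_of_le_pathDensity {ε : ℝ} (hε : 0 ≤ ε) (hA : IsOriented A)
    (hT : T3Free A) (hdensity : 24 / 125 - ε ≤ pathDensity A 4) :
    5 * (Fintype.card V : ℝ) * numCopies C3rel A ≤
      6 * (Fintype.card V : ℝ) ^ 3 + 125 / 24 * ε * (Fintype.card V : ℝ) ^ 4 := by
  have hcount : 125 * (numPaths A 4 : ℝ) + 5 * (Fintype.card V : ℝ) * numCopies C3rel A ≤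
      (Fintype.card V : ℝ) ^ 4 := by
    exact_mod_cast numPaths_add_numCopies_C3rel_le hA hT
  have hpaths : (24 / 125 - ε) * ((Fintype.card V).choose 4 : ℝ) ≤ numPaths A 4 :=
    mul_le_of_le_div₀ (Nat.cast_nonneg _) (Nat.cast_nonneg _) hdensity
  have hfactorial : ((Fintype.card V).descFactorial 4 : ℝ) = 24 * (Fintype.card V).choose 4 := by
    exact_mod_cast Nat.descFactorial_eq_factorial_mul_choose (Fintype.card V) 4
  have hlower : (Fintype.card V : ℝ) ^ 4 ≤
      (Fintype.card V).descFactorial 4 + 6 * (Fintype.card V : ℝ) ^ 3 := by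
    exact_mod_cast pow_succ_le_descFactorial_add (Fintype.card V) 3
  have hupper : ((Fintype.card V).descFactorial 4 : ℝ) ≤ (Fintype.card V : ℝ) ^ 4 := by
    exact_mod_cast Nat.descFactorial_le_pow (Fintype.card V) 4
  rw [hfactorial] at hlower hupper
  linarith [mul_le_mul_of_nonneg_left hupper hε]

theorem few_directed_triangles_general {δ : ℝ} (hδ : 0 < δ) (hA : IsOriented A) (hT : T3Free A)
    (hcard : 4 / δ ≤ Fintype.card V) (hdensity : 24 / 125 - δ / 2 ≤ pathDensity A 4) :
    (numCopies C3rel A : ℝ) ≤ δ * (Fintype.card V : ℝ) ^ 3 := by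
  have hpos : 0 < (Fintype.card V : ℝ) := (div_pos four_pos hδ).trans_le hcard
  have hlarge : 4 ≤ δ * Fintype.card V := (div_le_iff₀' hδ).mp hcard
  have hcubic : 4 * (Fintype.card V : ℝ) ^ 3 ≤ δ * Fintype.card V * (Fintype.card V : ℝ) ^ 3 := by
    gcongr
  refine le_of_mul_le_mul_left ?_ (mul_pos (by norm_num : (0 : ℝ) < 5) hpos)
  calc 5 * (Fintype.card V : ℝ) * numCopies C3rel A
      ≤ 6 * (Fintype.card V : ℝ) ^ 3 + 125 / 24 * (δ / 2) * (Fintype.card V : ℝ) ^ 4 :=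
        mul_numCopies_C3rel_le_of_le_pathDensity (half_pos hδ).le hA hT hdensity
    _ ≤ 5 * Fintype.card V * (δ * (Fintype.card V : ℝ) ^ 3) := by
        linarith [mul_nonneg hδ.le (pow_nonneg hpos.le 4)]

end Main

/-- For every `δ > 0` there are `n₀` and `ε' > 0` such that every
`T⃗₃`-free oriented graph on `n ≥ n₀` vertices with `d_{P⃗₄} ≥ 24/125 − ε'` contains at
most `δ n³` directed triangles. -/
theorem few_directed_triangles :
    ∀ δ : ℝ, 0 < δ → ∃ (n₀ : ℕ) (ε' : ℝ), 0 < ε' ∧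
      ∀ n : ℕ, n₀ ≤ n → ∀ A : Fin n → Fin n → Prop, IsOriented A → T3Free A →
        24 / 125 - ε' ≤ pathDensity A 4 →
        (numCopies C3rel A : ℝ) ≤ δ * (n : ℝ) ^ 3 := by
  intro δ hδ
  refine ⟨⌈4 / δ⌉₊, δ / 2, half_pos hδ, fun n hn A hA hT hdensity => ?_⟩
  simpa using few_directed_triangles_general hδ hA hT (by simpa using Nat.ceil_le.mp hn) hdensity
end

section
/- The inducibility of the directed path on five vertices in the family T⃗ of T⃗₃-free oriented graphs equals 5!/6⁴ = 5/54; that is, I(P⃗₅, T⃗) = 5!/6⁴. -/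
open scoped Classical

open Finset Filter Topology

/-!
For the upper bound, grow a random induced path in a `T⃗₃`-free oriented graph vertex by
vertex, mixing several orders of growth. The induced `P⃗₅`s are the possible outcomes, so the
sum of their probabilities is at most `1`; it remains to see that each of them has
probability at least `6⁴ / n⁵`. Such a probability is a sum of products of inverse numbers of
options, and a tangent inequality bounds each product below by an affine function of the
numbers of options. In the total of these affine functions every vertex of the graph is
counted with the weight of the option sets it belongs to, which depends only on its
adjacencies to the path; by `T⃗₃`-freeness this weight is at most `8`. The lower bound comes
from the balanced blow-up of the directed 6-cycle.
-/

namespace OrientedPath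

variable {V : Type*} {A : V → V → Prop} {k : ℕ}

/-- `p` lists, in order, the vertices of an induced copy of `P⃗ₖ`. -/
def IsPathEmbedding (A : V → V → Prop) (p : Fin k → V) : Prop :=
  ∀ i j : Fin k, A (p i) (p j) ↔ (j : ℕ) = i + 1

lemma IsPathEmbedding.init {q : Fin (k + 1) → V} (hq : IsPathEmbedding A q) :
    IsPathEmbedding A (Fin.init q) :=
  fun i j => hq i.castSucc j.castSucc

lemma IsPathEmbedding.tail {q : Fin (k + 1) → V} (hq : IsPathEmbedding A q) :
    IsPathEmbedding A (Fin.tail q) :=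
  fun i j => by simpa [Fin.tail] using hq i.succ j.succ

lemma IsPathEmbedding.injective {p : Fin k → V} (hp : IsPathEmbedding A p) :
    Function.Injective p := by
  have le_of_eq_of_succ_lt {i j : Fin k} (hij : p i = p j) (hi : (i : ℕ) + 1 < k) :
      (i : ℕ) = j := by
    have := (hp j ⟨i + 1, hi⟩).1 (hij ▸ (hp i ⟨i + 1, hi⟩).2 rfl)
    simpa using this
  intro i j hij
  by_cases hi : (i : ℕ) + 1 < k
  · exact Fin.ext (le_of_eq_of_succ_lt hij hi)
  by_cases hj : (j : ℕ) + 1 < k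
  · exact Fin.ext (le_of_eq_of_succ_lt hij.symm hj).symm
  · omega

/-- The directed path is rigid. -/
lemma IsPathEmbedding.eq_of_range_eq {p q : Fin k → V} (hp : IsPathEmbedding A p)
    (hq : IsPathEmbedding A q) (h : Set.range p = Set.range q) : p = q := by
  have hmem (i : Fin k) : p i ∈ Set.range q := h ▸ Set.mem_range_self i
  choose σ hσ using hmem
  have hσ_succ (i j : Fin k) : (σ j : ℕ) = σ i + 1 ↔ (j : ℕ) = i + 1 := by
    rw [← hq, hσ, hσ, hp]
  have hσ_inj : Function.Injective σ := fun i j hij => hp.injective (by rw [← hσ, ← hσ, hij])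
  have hσ_mono : StrictMono σ := by
    cases k with
    | zero => exact fun i => i.elim0
    | succ k =>
      refine Fin.strictMono_iff_lt_succ.2 fun i => ?_
      have := (hσ_succ i.castSucc i.succ).2 (by simp)
      exact Fin.lt_def.2 (by omega)
  have hσ_id : σ = id := (hσ_mono.range_inj strictMono_id).1
    (by rw [(Finite.surjective_of_injective hσ_inj).range_eq, Set.range_id])
  funext i
  rw [← hσ, hσ_id, id]

/-- The sign of the pair `v, w`: `1` for an arc `v → w`, `-1` for an arc `w → v` and `0` for a
non-adjacent pair. -/
noncomputable def arcSign (A : V → V → Prop) (v w : V) : SignType :=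
  if A v w then 1 else if A w v then -1 else 0

lemma arcSign_eq_one_iff {v w : V} : arcSign A v w = 1 ↔ A v w := by
  unfold arcSign
  split_ifs <;> simp_all

lemma arcSign_eq_zero_iff {v w : V} : arcSign A v w = 0 ↔ ¬A v w ∧ ¬A w v := by
  unfold arcSign
  split_ifs <;> simp_all

lemma arcSign_eq_neg_one_iff (hO : IsOriented A) {v w : V} : arcSign A v w = -1 ↔ A w v := by
  have := hO v w
  unfold arcSign
  split_ifs <;> simp_all

/-- A pair of signs that a vertex of a `T⃗₃`-free oriented graph can have with respect to the tail
and the head of an arc. -/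
def IsAdmissible (s t : SignType) : Prop :=
  (s = 1 → t = 0) ∧ (s = -1 → t ≠ -1)

instance : DecidableRel IsAdmissible := fun _ _ => inferInstanceAs (Decidable (_ ∧ _))

lemma isAdmissible_arcSign (hO : IsOriented A) (hT : T3Free A) {v v' w : V} (h : A v v') :
    IsAdmissible (arcSign A v w) (arcSign A v' w) := by
  rw [IsAdmissible, arcSign_eq_one_iff, arcSign_eq_zero_iff, arcSign_eq_neg_one_iff hO, Ne,
    arcSign_eq_neg_one_iff hO]
  exact ⟨fun hw => ⟨fun hw' => hT v v' w ⟨h, hw', hw⟩, fun hw' => hT v w v' ⟨hw, hw', h⟩⟩,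
    fun hw hw' => hT w v v' ⟨hw, h, hw'⟩⟩

section Extensions

variable [Fintype V]

/-- The labelled induced copies of `P⃗ₖ` in `A`. -/
noncomputable def pathEmbeddings (A : V → V → Prop) (k : ℕ) : Finset (Fin k → V) :=
  {p | IsPathEmbedding A p}

lemma mem_pathEmbeddings {p : Fin k → V} : p ∈ pathEmbeddings A k ↔ IsPathEmbedding A p := by
  simp [pathEmbeddings]

lemma numPaths_eq_card_pathEmbeddings [DecidableEq V] (A : V → V → Prop) (k : ℕ) :
    numPaths A k = #(pathEmbeddings A k) := by
  symm
  refine card_bij (fun p _ => univ.image p) (fun p hp => ?_) (fun p hp q hq h => ?_)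
    (fun S hS => ?_)
  · have hp := mem_pathEmbeddings.1 hp
    exact mem_filter.2 ⟨mem_univ _, p, hp.injective, by simp, hp⟩
  · refine (mem_pathEmbeddings.1 hp).eq_of_range_eq (mem_pathEmbeddings.1 hq) ?_
    simpa using congrArg (fun S : Finset V => (S : Set V)) h
  · obtain ⟨p, -, hS, hp⟩ := (mem_filter.1 hS).2
    exact ⟨p, mem_pathEmbeddings.2 hp, by ext v; simp [hS]⟩

/-- The vertices `w` that prolong the path `p` to an induced path `p 0 → ⋯ → p (k - 1) → w`. -/
noncomputable def rightExt (A : V → V → Prop) (p : Fin k → V) : Finset V :=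
  {w | ∀ i, arcSign A (p i) w = if (i : ℕ) + 1 = k then 1 else 0}

/-- The vertices `w` that prolong the path `p` to an induced path `w → p 0 → ⋯ → p (k - 1)`. -/
noncomputable def leftExt (A : V → V → Prop) (p : Fin k → V) : Finset V :=
  {w | ∀ i, arcSign A (p i) w = if (i : ℕ) = 0 then -1 else 0}

lemma isPathEmbedding_snoc_iff (hO : IsOriented A) {p : Fin k → V} {w : V} :
    IsPathEmbedding A (Fin.snoc p w : Fin (k + 1) → V) ↔
      IsPathEmbedding A p ∧ w ∈ rightExt A p := by
  have hw : ¬A w w := fun h => hO w w h h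
  have h_sign (i : Fin k) : arcSign A (p i) w = (if (i : ℕ) + 1 = k then 1 else 0) ↔
      (A (p i) w ↔ k = i + 1) ∧ ¬A w (p i) := by
    have := hO (p i) w
    split_ifs with hi
    · rw [arcSign_eq_one_iff]; tauto
    · rw [arcSign_eq_zero_iff]; tauto
  have h_succ (i : Fin k) : (i : ℕ) ≠ k + 1 := by omega
  simp only [IsPathEmbedding, Fin.forall_fin_succ', Fin.snoc_castSucc, Fin.val_castSucc,
    Fin.snoc_last, Fin.val_last, forall_and, h_succ, iff_false, hw, Nat.left_eq_add, one_ne_zero,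
    and_true, rightExt, mem_filter, mem_univ, h_sign, true_and]
  tauto

lemma isPathEmbedding_cons_iff (hO : IsOriented A) {p : Fin k → V} {w : V} :
    IsPathEmbedding A (Fin.cons w p : Fin (k + 1) → V) ↔
      IsPathEmbedding A p ∧ w ∈ leftExt A p := by
  have hw : ¬A w w := fun h => hO w w h h
  have h_sign (i : Fin k) : arcSign A (p i) w = (if (i : ℕ) = 0 then -1 else 0) ↔
      (A w (p i) ↔ (i : ℕ) = 0) ∧ ¬A (p i) w := by
    have := hO (p i) w
    split_ifs with hi
    · rw [arcSign_eq_neg_one_iff hO]; tauto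
    · rw [arcSign_eq_zero_iff]; tauto
  simp only [IsPathEmbedding, Fin.forall_fin_succ, Fin.cons_zero, Fin.coe_ofNat_eq_mod,
    Nat.zero_mod, Nat.right_eq_add, Nat.add_eq_zero_iff, Fin.val_eq_zero_iff, one_ne_zero,
    and_false, iff_false, Fin.cons_succ, Fin.val_succ, Nat.add_right_cancel_iff, forall_and, hw,
    not_false_eq_true, true_and, leftExt, mem_filter, mem_univ, h_sign]
  tauto

lemma isPathEmbedding_iff_init (hO : IsOriented A) {q : Fin (k + 1) → V} :
    IsPathEmbedding A q ↔
      IsPathEmbedding A (Fin.init q) ∧ q (Fin.last k) ∈ rightExt A (Fin.init q) := by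
  rw [← isPathEmbedding_snoc_iff hO, Fin.snoc_init_self]

lemma isPathEmbedding_iff_tail (hO : IsOriented A) {q : Fin (k + 1) → V} :
    IsPathEmbedding A q ↔
      IsPathEmbedding A (Fin.tail q) ∧ q 0 ∈ leftExt A (Fin.tail q) := by
  rw [← isPathEmbedding_cons_iff hO, Fin.cons_self_tail]

lemma sum_pathEmbeddings_succ_init (hO : IsOriented A) (F : (Fin k → V) → ℝ) :
    ∑ q ∈ pathEmbeddings A (k + 1), F (Fin.init q) =
      ∑ p ∈ pathEmbeddings A k, #(rightExt A p) * F p := by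
  calc ∑ q ∈ pathEmbeddings A (k + 1), F (Fin.init q)
      = ∑ x ∈ (pathEmbeddings A k).sigma (rightExt A), F x.1 :=
        sum_bij' (fun q _ => ⟨Fin.init q, q (Fin.last k)⟩) (fun x _ => Fin.snoc x.1 x.2)
          (by simp [mem_pathEmbeddings, isPathEmbedding_iff_init hO])
          (by simp [mem_pathEmbeddings, isPathEmbedding_snoc_iff hO])
          (by simp) (by simp) (by simp)
    _ = ∑ p ∈ pathEmbeddings A k, #(rightExt A p) * F p := by simp [sum_sigma]

lemma sum_pathEmbeddings_succ_tail (hO : IsOriented A) (F : (Fin k → V) → ℝ) :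
    ∑ q ∈ pathEmbeddings A (k + 1), F (Fin.tail q) =
      ∑ p ∈ pathEmbeddings A k, #(leftExt A p) * F p := by
  calc ∑ q ∈ pathEmbeddings A (k + 1), F (Fin.tail q)
      = ∑ x ∈ (pathEmbeddings A k).sigma (leftExt A), F x.1 :=
        sum_bij' (fun q _ => ⟨Fin.tail q, q 0⟩) (fun x _ => Fin.cons x.2 x.1)
          (by simp [mem_pathEmbeddings, isPathEmbedding_iff_tail hO])
          (by simp [mem_pathEmbeddings, isPathEmbedding_cons_iff hO])
          (by simp) (by simp) (by simp)
    _ = ∑ p ∈ pathEmbeddings A k, #(leftExt A p) * F p := by simp [sum_sigma]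

lemma card_rightExt_init_pos (hO : IsOriented A) {q : Fin (k + 1) → V}
    (hq : IsPathEmbedding A q) : 0 < #(rightExt A (Fin.init q)) :=
  card_pos.2 ⟨_, ((isPathEmbedding_iff_init hO).1 hq).2⟩

lemma card_leftExt_tail_pos (hO : IsOriented A) {q : Fin (k + 1) → V}
    (hq : IsPathEmbedding A q) : 0 < #(leftExt A (Fin.tail q)) :=
  card_pos.2 ⟨_, ((isPathEmbedding_iff_tail hO).1 hq).2⟩

lemma card_rightExt_zero (p : Fin 0 → V) : #(rightExt A p) = Fintype.card V := by
  simp [rightExt]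

lemma card_leftExt_zero (p : Fin 0 → V) : #(leftExt A p) = Fintype.card V := by
  simp [leftExt]

/-- A random induced `P⃗ₖ`, encoded by the probability of each path; the total may be less than `1`
as a random path that cannot be extended is lost when it grows. -/
structure IsSubprobWeight (A : V → V → Prop) (W : (Fin k → V) → ℝ) : Prop where
  nonneg : 0 ≤ W
  sum_le_one : ∑ p ∈ pathEmbeddings A k, W p ≤ 1

/-- The number of ways to extend `p` by one vertex at either end. -/
noncomputable def extCount (A : V → V → Prop) (p : Fin k → V) : ℕ :=
  #(rightExt A p) + #(leftExt A p)

lemma extCount_init_pos (hO : IsOriented A) {q : Fin (k + 1) → V} (hq : IsPathEmbedding A q) :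
    0 < extCount A (Fin.init q) :=
  Nat.add_pos_left (card_rightExt_init_pos hO hq) _

lemma extCount_tail_pos (hO : IsOriented A) {q : Fin (k + 1) → V} (hq : IsPathEmbedding A q) :
    0 < extCount A (Fin.tail q) :=
  Nat.add_pos_right _ (card_leftExt_tail_pos hO hq)

/-- The weights after a uniformly random extension of the random path `W` at its last vertex. -/
noncomputable def growRight (A : V → V → Prop) (W : (Fin k → V) → ℝ) (q : Fin (k + 1) → V) : ℝ :=
  W (Fin.init q) / #(rightExt A (Fin.init q))

/-- The weights after a uniformly random extension of the random path `W` at its first vertex. -/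
noncomputable def growLeft (A : V → V → Prop) (W : (Fin k → V) → ℝ) (q : Fin (k + 1) → V) : ℝ :=
  W (Fin.tail q) / #(leftExt A (Fin.tail q))

/-- The weights after a random extension of the random path `W`, uniform among all extensions at
either end. -/
noncomputable def grow (A : V → V → Prop) (W : (Fin k → V) → ℝ) (q : Fin (k + 1) → V) : ℝ :=
  W (Fin.init q) / extCount A (Fin.init q) + W (Fin.tail q) / extCount A (Fin.tail q)

lemma isSubprobWeight_one (A : V → V → Prop) : IsSubprobWeight A (1 : (Fin 0 → V) → ℝ) where
  nonneg := zero_le_one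
  sum_le_one := by simpa using card_le_univ (pathEmbeddings A 0)

lemma mul_div_le_of_nonneg {a : ℝ} (ha : 0 ≤ a) (c : ℝ) : c * (a / c) ≤ a := by
  rw [mul_div_left_comm]
  exact mul_le_of_le_one_right ha (div_self_le_one c)

lemma isSubprobWeight_growRight (hO : IsOriented A) {W : (Fin k → V) → ℝ}
    (hW : IsSubprobWeight A W) : IsSubprobWeight A (growRight A W) where
  nonneg _ := div_nonneg (hW.nonneg _) (Nat.cast_nonneg _)
  sum_le_one :=
    calc ∑ q ∈ pathEmbeddings A (k + 1), growRight A W q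
        = ∑ p ∈ pathEmbeddings A k, #(rightExt A p) * (W p / #(rightExt A p)) :=
          sum_pathEmbeddings_succ_init hO fun p => W p / #(rightExt A p)
      _ ≤ ∑ p ∈ pathEmbeddings A k, W p :=
          sum_le_sum fun p _ => mul_div_le_of_nonneg (hW.nonneg p) _
      _ ≤ 1 := hW.sum_le_one

lemma isSubprobWeight_growLeft (hO : IsOriented A) {W : (Fin k → V) → ℝ}
    (hW : IsSubprobWeight A W) : IsSubprobWeight A (growLeft A W) where
  nonneg _ := div_nonneg (hW.nonneg _) (Nat.cast_nonneg _)
  sum_le_one :=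
    calc ∑ q ∈ pathEmbeddings A (k + 1), growLeft A W q
        = ∑ p ∈ pathEmbeddings A k, #(leftExt A p) * (W p / #(leftExt A p)) :=
          sum_pathEmbeddings_succ_tail hO fun p => W p / #(leftExt A p)
      _ ≤ ∑ p ∈ pathEmbeddings A k, W p :=
          sum_le_sum fun p _ => mul_div_le_of_nonneg (hW.nonneg p) _
      _ ≤ 1 := hW.sum_le_one

lemma isSubprobWeight_grow (hO : IsOriented A) {W : (Fin k → V) → ℝ}
    (hW : IsSubprobWeight A W) : IsSubprobWeight A (grow A W) where
  nonneg _ := add_nonneg (div_nonneg (hW.nonneg _) (Nat.cast_nonneg _))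
    (div_nonneg (hW.nonneg _) (Nat.cast_nonneg _))
  sum_le_one :=
    calc ∑ q ∈ pathEmbeddings A (k + 1), grow A W q
        = ∑ p ∈ pathEmbeddings A k, (#(rightExt A p) * (W p / extCount A p)
            + #(leftExt A p) * (W p / extCount A p)) := by
          rw [sum_add_distrib, ← sum_pathEmbeddings_succ_init hO fun p => W p / extCount A p,
            ← sum_pathEmbeddings_succ_tail hO fun p => W p / extCount A p, ← sum_add_distrib]
          rfl
      _ = ∑ p ∈ pathEmbeddings A k, extCount A p * (W p / extCount A p) := by
          simp only [extCount, Nat.cast_add, add_mul]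
      _ ≤ ∑ p ∈ pathEmbeddings A k, W p :=
          sum_le_sum fun p _ => mul_div_le_of_nonneg (hW.nonneg p) _
      _ ≤ 1 := hW.sum_le_one

/-- The weights of a random induced `P⃗₄`: with probability `1/6` each it grows from a random vertex
only to the right or only to the left, and with probability `2/3` it grows from a random vertex once
to the right, once to the left, and then at a random end. This mixture is balanced so that the bound
in `profileCost_add_profileCost_le` comes out as `8`. -/
noncomputable def fourPathWeight (A : V → V → Prop) : (Fin 4 → V) → ℝ :=
  (1 / 6 : ℝ) • growRight A (growRight A (growRight A (growRight A 1)))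
    + (1 / 6 : ℝ) • growLeft A (growLeft A (growLeft A (growLeft A 1)))
    + (2 / 3 : ℝ) • grow A (growLeft A (growRight A (growRight A 1)))

lemma isSubprobWeight_fourPathWeight (hO : IsOriented A) :
    IsSubprobWeight A (fourPathWeight A) := by
  have right {k : ℕ} {W : (Fin k → V) → ℝ} := isSubprobWeight_growRight (W := W) hO
  have left {k : ℕ} {W : (Fin k → V) → ℝ} := isSubprobWeight_growLeft (W := W) hO
  have h₀ := isSubprobWeight_one A
  have hR := right (right (right (right h₀)))
  have hL := left (left (left (left h₀)))
  have hM := isSubprobWeight_grow hO (left (right (right h₀)))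
  constructor
  · intro p
    have := hR.nonneg p
    have := hL.nonneg p
    have := hM.nonneg p
    simp only [fourPathWeight, Pi.add_apply, Pi.smul_apply, smul_eq_mul, Pi.zero_apply] at *
    positivity
  · have := hR.sum_le_one
    have := hL.sum_le_one
    have := hM.sum_le_one
    simp only [fourPathWeight, Pi.add_apply, Pi.smul_apply, smul_eq_mul, sum_add_distrib,
      ← mul_sum]
    linarith

lemma prod_mul_one_add_sum_le_prod_inv {ι : Type*} (s : Finset ι) {c x : ι → ℝ}
    (hc : ∀ i ∈ s, 0 < c i) (hx : ∀ i ∈ s, 0 < x i) :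
    (∏ i ∈ s, c i) * (1 + ∑ i ∈ s, (1 - c i * x i)) ≤ ∏ i ∈ s, (x i)⁻¹ := by
  have h_exp : 1 + ∑ i ∈ s, (1 - c i * x i) ≤ ∏ i ∈ s, (c i * x i)⁻¹ :=
    calc 1 + ∑ i ∈ s, (1 - c i * x i) ≤ Real.exp (∑ i ∈ s, (1 - c i * x i)) := by
          rw [add_comm]
          exact Real.add_one_le_exp _
      _ = ∏ i ∈ s, Real.exp (1 - c i * x i) := Real.exp_sum _ _
      _ ≤ ∏ i ∈ s, (c i * x i)⁻¹ := by
          refine prod_le_prod (fun i _ => (Real.exp_pos _).le) fun i hi => ?_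
          have := mul_pos (hc i hi) (hx i hi)
          rw [← neg_sub, Real.exp_neg]
          gcongr
          simpa using Real.add_one_le_exp (c i * x i - 1)
  calc (∏ i ∈ s, c i) * (1 + ∑ i ∈ s, (1 - c i * x i))
      ≤ (∏ i ∈ s, c i) * ∏ i ∈ s, (c i * x i)⁻¹ :=
        mul_le_mul_of_nonneg_left h_exp (prod_nonneg fun i hi => (hc i hi).le)
    _ = ∏ i ∈ s, (x i)⁻¹ := by
        rw [← prod_mul_distrib]
        exact prod_congr rfl fun i hi => by field_simp [(hc i hi).ne']

/-- In a balanced blow-up of the directed 6-cycle the choices have `n / 6`, `n / 6`, `n / μ` and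
`n / 3` options; this is the tangent inequality at that point. -/
lemma mul_five_sub_le_pow_div {n a b c d μ : ℝ} (hn : 0 < n) (ha : 0 < a) (hb : 0 < b) (hc : 0 < c)
    (hd : 0 < d) (hμ : 0 < μ) :
    108 * μ * (5 - (6 * a + 6 * b + μ * c + 3 * d) / n) ≤ n ^ 5 * (1 / n / a / b / c / d) := by
  have h := prod_mul_one_add_sum_le_prod_inv univ (c := ![6 / n, 6 / n, μ / n, 3 / n])
    (x := ![a, b, c, d]) (by simp [Fin.forall_fin_succ, *]) (by simp [Fin.forall_fin_succ, *])
  simp only [Fin.prod_univ_four, Fin.sum_univ_four, Matrix.cons_val] at h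
  calc 108 * μ * (5 - (6 * a + 6 * b + μ * c + 3 * d) / n)
      = n ^ 4 * (6 / n * (6 / n) * (μ / n) * (3 / n) * (1 + (1 - 6 / n * a + (1 - 6 / n * b)
          + (1 - μ / n * c) + (1 - 3 / n * d)))) := by field_simp; ring
    _ ≤ n ^ 4 * (a⁻¹ * b⁻¹ * c⁻¹ * d⁻¹) := by gcongr
    _ = n ^ 5 * (1 / n / a / b / c / d) := by field_simp

/-- The numbers of options in the choices that build `p` under `fourPathWeight` and then extend it,
combined with the coefficients that `mul_five_sub_le_pow_div` gives them. -/
noncomputable def extensionCost (A : V → V → Prop) (p : Fin 4 → V) : ℕ :=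
  #(rightExt A (Fin.init (Fin.init (Fin.init p)))) + #(rightExt A (Fin.init (Fin.init p)))
    + #(rightExt A (Fin.init p))
    + #(leftExt A (Fin.tail (Fin.tail (Fin.tail p)))) + #(leftExt A (Fin.tail (Fin.tail p)))
    + #(leftExt A (Fin.tail p))
    + 2 * (#(rightExt A (Fin.init (Fin.tail (Fin.init p)))) + #(leftExt A (Fin.tail (Fin.init p))))
    + 2 * (#(rightExt A (Fin.init (Fin.tail (Fin.tail p)))) + #(leftExt A (Fin.tail (Fin.tail p))))
    + extCount A (Fin.init p) + extCount A (Fin.tail p) + 3 * extCount A p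

lemma le_fourPathWeight_div (hO : IsOriented A) {p : Fin 4 → V} (hp : IsPathEmbedding A p)
    (hext : 0 < extCount A p) :
    648 * (5 - extensionCost A p / (Fintype.card V : ℝ)) ≤
      Fintype.card V ^ 5 * (fourPathWeight A p / extCount A p) := by
  have hn : (0 : ℝ) < Fintype.card V := mod_cast Fintype.card_pos_iff.2 ⟨p 0⟩
  have hx : (0 : ℝ) < extCount A p := mod_cast hext
  have right {k : ℕ} {q : Fin (k + 1) → V} (hq : IsPathEmbedding A q) :
      (0 : ℝ) < #(rightExt A (Fin.init q)) := mod_cast card_rightExt_init_pos hO hq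
  have left {k : ℕ} {q : Fin (k + 1) → V} (hq : IsPathEmbedding A q) :
      (0 : ℝ) < #(leftExt A (Fin.tail q)) := mod_cast card_leftExt_tail_pos hO hq
  have hx_init : (0 : ℝ) < extCount A (Fin.init p) := mod_cast extCount_init_pos hO hp
  have hx_tail : (0 : ℝ) < extCount A (Fin.tail p) := mod_cast extCount_tail_pos hO hp
  have hi := hp.init
  have ht := hp.tail
  have h_right := mul_five_sub_le_pow_div hn (right hi.init) (right hi) (right hp) hx
    (μ := 6) (by norm_num)
  have h_left := mul_five_sub_le_pow_div hn (left ht.tail) (left ht) (left hp) hx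
    (μ := 6) (by norm_num)
  have h_init := mul_five_sub_le_pow_div hn (right hi.tail) (left hi) hx_init hx
    (μ := 3) (by norm_num)
  have h_tail := mul_five_sub_le_pow_div hn (right ht.tail) (left ht) hx_tail hx
    (μ := 3) (by norm_num)
  simp only [fourPathWeight, Pi.add_apply, Pi.smul_apply, smul_eq_mul, grow, growRight, growLeft,
    Pi.one_apply, card_rightExt_zero, card_leftExt_zero]
  simp only [extensionCost, Nat.cast_add, Nat.cast_mul, Nat.cast_ofNat]
  simp only [add_div, mul_add, mul_div_assoc] at *
  linarith

/-- The contribution of a vertex to the `extensionCost` of a path, in terms of its signs with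
respect to the vertices of the path. -/
def profileCost (a b c d : SignType) : ℕ :=
  let ind (P : Prop) [Decidable P] : ℕ := if P then 1 else 0
  ind (a = 1) + ind (a = 0 ∧ b = 1) + ind (a = 0 ∧ b = 0 ∧ c = 1)
    + ind (d = -1) + ind (c = -1 ∧ d = 0) + ind (b = -1 ∧ c = 0 ∧ d = 0)
    + 2 * (ind (b = 1) + ind (b = -1 ∧ c = 0)) + 2 * (ind (c = 1) + ind (c = -1 ∧ d = 0))
    + (ind (a = 0 ∧ b = 0 ∧ c = 1) + ind (a = -1 ∧ b = 0 ∧ c = 0))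
    + (ind (b = 0 ∧ c = 0 ∧ d = 1) + ind (b = -1 ∧ c = 0 ∧ d = 0))
    + 3 * (ind (a = 0 ∧ b = 0 ∧ c = 0 ∧ d = 1) + ind (a = -1 ∧ b = 0 ∧ c = 0 ∧ d = 0))

lemma extensionCost_eq_sum_profileCost (A : V → V → Prop) (p : Fin 4 → V) :
    extensionCost A p = ∑ w, profileCost (arcSign A (p 0) w) (arcSign A (p 1) w)
      (arcSign A (p 2) w) (arcSign A (p 3) w) := by
  simp only [extensionCost, extCount, profileCost, rightExt, leftExt, card_filter,
    sum_add_distrib, ← mul_sum, Fin.forall_fin_succ, Fin.init, Fin.tail]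
  simp

lemma profileCost_add_profileCost_le : ∀ {a b c d e : SignType},
    IsAdmissible a b → IsAdmissible b c → IsAdmissible c d → IsAdmissible d e →
    profileCost a b c d + profileCost b c d e ≤ 8 := by
  decide

lemma extensionCost_init_add_tail_le (hO : IsOriented A) (hT : T3Free A) {q : Fin 5 → V}
    (hq : IsPathEmbedding A q) :
    extensionCost A (Fin.init q) + extensionCost A (Fin.tail q) ≤ 8 * Fintype.card V := by
  have h_adm (i : Fin 4) (w : V) :
      IsAdmissible (arcSign A (q i.castSucc) w) (arcSign A (q i.succ) w) :=
    isAdmissible_arcSign hO hT ((hq _ _).2 (by simp))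
  rw [extensionCost_eq_sum_profileCost, extensionCost_eq_sum_profileCost, ← sum_add_distrib,
    mul_comm, ← smul_eq_mul]
  exact sum_le_card_nsmul _ _ _ fun w _ =>
    profileCost_add_profileCost_le (h_adm 0 w) (h_adm 1 w) (h_adm 2 w) (h_adm 3 w)

lemma le_grow_fourPathWeight (hO : IsOriented A) (hT : T3Free A) {q : Fin 5 → V}
    (hq : IsPathEmbedding A q) :
    6 ^ 4 ≤ Fintype.card V ^ 5 * grow A (fourPathWeight A) q := by
  have hn : (0 : ℝ) < Fintype.card V := mod_cast Fintype.card_pos_iff.2 ⟨q 0⟩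
  have h_cost : (extensionCost A (Fin.init q) / Fintype.card V +
      extensionCost A (Fin.tail q) / Fintype.card V : ℝ) ≤ 8 := by
    rw [← add_div, div_le_iff₀ hn]
    exact_mod_cast extensionCost_init_add_tail_le hO hT hq
  calc (6 ^ 4 : ℝ)
      ≤ 648 * (5 - extensionCost A (Fin.init q) / (Fintype.card V : ℝ)) +
          648 * (5 - extensionCost A (Fin.tail q) / (Fintype.card V : ℝ)) := by linarith
    _ ≤ Fintype.card V ^ 5 * grow A (fourPathWeight A) q := by
        rw [grow, mul_add]
        exact add_le_add (le_fourPathWeight_div hO hq.init (extCount_init_pos hO hq))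
          (le_fourPathWeight_div hO hq.tail (extCount_tail_pos hO hq))

theorem card_pathEmbeddings_five_mul_le (hO : IsOriented A) (hT : T3Free A) :
    #(pathEmbeddings A 5) * 6 ^ 4 ≤ Fintype.card V ^ 5 := by
  have h_sub := isSubprobWeight_grow hO (isSubprobWeight_fourPathWeight hO)
  have : (#(pathEmbeddings A 5) * 6 ^ 4 : ℝ) ≤ Fintype.card V ^ 5 :=
    calc (#(pathEmbeddings A 5) * 6 ^ 4 : ℝ)
        = ∑ _q ∈ pathEmbeddings A 5, 6 ^ 4 := by rw [sum_const, nsmul_eq_mul]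
      _ ≤ ∑ q ∈ pathEmbeddings A 5, Fintype.card V ^ 5 * grow A (fourPathWeight A) q :=
          sum_le_sum fun _ hq => le_grow_fourPathWeight hO hT (mem_pathEmbeddings.1 hq)
      _ ≤ Fintype.card V ^ 5 := by
          rw [← mul_sum]
          exact mul_le_of_le_one_right (by positivity) h_sub.sum_le_one
  exact_mod_cast this

end Extensions

/-- The balanced blow-up of the directed `m`-cycle on `n` vertices, with the residue classes modulo
`m` as parts. -/
def cycleBlowup (m n : ℕ) (u v : Fin n) : Prop :=
  (v : ℕ) ≡ u + 1 [MOD m]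

lemma isOriented_cycleBlowup {m : ℕ} (hm : 3 ≤ m) (n : ℕ) : IsOriented (cycleBlowup m n) := by
  intro u v huv hvu
  have h : (u : ℕ) + 0 ≡ u + 2 [MOD m] := hvu.trans (huv.add_right 1)
  have := (Nat.ModEq.add_left_cancel' _ h).eq_of_lt_of_lt (by omega) (by omega)
  omega

lemma t3Free_cycleBlowup {m : ℕ} (hm : 2 ≤ m) (n : ℕ) : T3Free (cycleBlowup m n) := by
  rintro u v w ⟨huv, hvw, huw⟩
  have h : (u : ℕ) + 1 ≡ u + 2 [MOD m] := huw.symm.trans (hvw.trans (huv.add_right 1))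
  have h' : 0 ≡ 1 [MOD m] := Nat.ModEq.add_left_cancel' (u + 1) h
  exact absurd (h'.eq_of_lt_of_lt (by omega) (by omega)) zero_ne_one

lemma isPathEmbedding_cycleBlowup {m n : ℕ} (hkm : k < m) {p : Fin k → Fin n} (c : ℕ)
    (hp : ∀ i, (p i : ℕ) ≡ c + i [MOD m]) : IsPathEmbedding (cycleBlowup m n) p := by
  intro i j
  constructor
  · intro h
    have h' : c + j ≡ c + (i + 1) [MOD m] := (hp j).symm.trans (h.trans ((hp i).add_right 1))
    exact (Nat.ModEq.add_left_cancel' c h').eq_of_lt_of_lt (by omega) (by omega)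
  · intro h
    exact (hp j).trans (h ▸ ((hp i).add_right 1).symm)

lemma mul_div_pow_le_card_pathEmbeddings_cycleBlowup {m : ℕ} (hk : 0 < k) (hkm : k < m)
    (n : ℕ) : m * (n / m) ^ k ≤ #(pathEmbeddings (cycleBlowup m n) k) := by
  have hm : 0 < m := by omega
  have h_lt (c : ℕ) (j : Fin (n / m)) : m * j + c % m < n :=
    calc m * j + c % m < m * (j + 1) := by have := Nat.mod_lt c hm; rw [mul_add]; omega
      _ ≤ m * (n / m) := Nat.mul_le_mul_left _ j.2
      _ ≤ n := Nat.mul_div_le n m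
  let path (x : Fin m × (Fin k → Fin (n / m))) (i : Fin k) : Fin n :=
    ⟨m * x.2 i + (x.1 + i) % m, h_lt _ _⟩
  have h_mod (x) (i) : (path x i : ℕ) ≡ x.1 + i [MOD m] := by simp [path, Nat.ModEq]
  have h_div (x) (i) : (path x i : ℕ) / m = x.2 i := by
    simp [path, Nat.mul_add_div hm, Nat.div_eq_of_lt (Nat.mod_lt _ hm)]
  have h_inj : Function.Injective path := by
    intro x y hxy
    have h : (x.1 : ℕ) ≡ y.1 [MOD m] := (h_mod x ⟨0, hk⟩).symm.trans (hxy ▸ h_mod y ⟨0, hk⟩)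
    refine Prod.ext (Fin.ext (h.eq_of_lt_of_lt x.1.2 y.1.2)) (funext fun i => Fin.ext ?_)
    rw [← h_div, ← h_div, hxy]
  calc m * (n / m) ^ k = #(univ.image path) := by
        rw [card_image_of_injective _ h_inj]; simp
    _ ≤ #(pathEmbeddings (cycleBlowup m n) k) :=
        card_le_card (image_subset_iff.2 fun x _ =>
          mem_pathEmbeddings.2 (isPathEmbedding_cycleBlowup hkm x.1 (h_mod x)))

lemma pathDensity_le_maxDensityT3 {n : ℕ} {A : Fin n → Fin n → Prop} (hO : IsOriented A)
    (hT : T3Free A) (k : ℕ) : pathDensity A k ≤ maxDensityT3 k n := by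
  refine le_csSup ?_ ⟨A, hO, hT, rfl⟩
  refine ((Set.finite_range fun A : Fin n → Fin n → Prop => pathDensity A k).subset ?_).bddAbove
  rintro _ ⟨B, -, -, rfl⟩
  exact Set.mem_range_self B

lemma le_maxDensityT3 {m k : ℕ} (hm : 3 ≤ m) (hk : 0 < k) (hkm : k < m) (n : ℕ) :
    m * (((n / m : ℕ) : ℝ) ^ k / n.choose k) ≤ maxDensityT3 k n :=
  calc m * (((n / m : ℕ) : ℝ) ^ k / n.choose k)
      ≤ pathDensity (cycleBlowup m n) k := by
        rw [pathDensity, numPaths_eq_card_pathEmbeddings, Fintype.card_fin, ← mul_div_assoc]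
        gcongr
        exact_mod_cast mul_div_pow_le_card_pathEmbeddings_cycleBlowup hk hkm n
    _ ≤ maxDensityT3 k n :=
        pathDensity_le_maxDensityT3 (isOriented_cycleBlowup hm n)
          (t3Free_cycleBlowup (by omega) n) k

lemma maxDensityT3_five_le (n : ℕ) :
    maxDensityT3 5 n ≤ (n : ℝ) ^ 5 / n.choose 5 / 6 ^ 4 := by
  refine Real.sSup_le ?_ (by positivity)
  rintro _ ⟨A, hO, hT, rfl⟩
  have h : (#(pathEmbeddings A 5) * 6 ^ 4 : ℝ) ≤ n ^ 5 := by
    exact_mod_cast Fintype.card_fin n ▸ card_pathEmbeddings_five_mul_le hO hT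
  rw [pathDensity, numPaths_eq_card_pathEmbeddings, Fintype.card_fin, div_right_comm]
  gcongr
  exact (le_div_iff₀ (by positivity)).2 h

lemma tendsto_pow_div_choose {u : ℕ → ℕ} {a : ℝ}
    (hu : Tendsto (fun n => (u n : ℝ) / n) atTop (𝓝 a)) (k : ℕ) :
    Tendsto (fun n => (u n : ℝ) ^ k / n.choose k) atTop (𝓝 (k.factorial * a ^ k)) := by
  have h_choose : Tendsto (fun n : ℕ => (n : ℝ) ^ k / k.factorial / n.choose k) atTop (𝓝 1) := by
    refine (Asymptotics.isEquivalent_iff_tendsto_one ?_).1 (isEquivalent_choose k).symm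
    filter_upwards [eventually_ge_atTop k] with n hn
    exact_mod_cast (Nat.choose_pos hn).ne'
  have h := (h_choose.mul (hu.pow k)).const_mul (k.factorial : ℝ)
  rw [one_mul] at h
  refine h.congr' ?_
  filter_upwards [eventually_gt_atTop 0] with n hn
  have : (n : ℝ) ≠ 0 := mod_cast hn.ne'
  rw [div_pow]
  field_simp

lemma tendsto_natDiv_div (m : ℕ) :
    Tendsto (fun n : ℕ => ((n / m : ℕ) : ℝ) / n) atTop (𝓝 (1 / m)) := by
  refine ((tendsto_nat_floor_mul_div_atTop (by positivity : (0 : ℝ) ≤ 1 / m)).comp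
    tendsto_natCast_atTop_atTop).congr fun n => ?_
  rw [Function.comp_apply, one_div_mul_eq_div, Nat.floor_div_eq_div]

end OrientedPath

/-- `I(P⃗₅, T⃗) = 5!/6⁴`: the maximum density of induced copies of
`P⃗₅` over `T⃗₃`-free oriented graphs on `n` vertices tends to `5!/6⁴` as `n → ∞`. -/
theorem inducibility_P5_T3free :
    Filter.Tendsto (fun n : ℕ => maxDensityT3 5 n) Filter.atTop
      (nhds ((Nat.factorial 5 : ℝ) / 6 ^ 4)) := by
  have h_lower : Tendsto (fun n : ℕ => (6 : ℕ) * (((n / 6 : ℕ) : ℝ) ^ 5 / n.choose 5)) atTop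
      (𝓝 ((Nat.factorial 5 : ℝ) / 6 ^ 4)) := by
    convert (OrientedPath.tendsto_pow_div_choose (OrientedPath.tendsto_natDiv_div 6) 5).const_mul _
      using 2
    norm_num [Nat.factorial]
  have h_upper : Tendsto (fun n : ℕ => (n : ℝ) ^ 5 / n.choose 5 / 6 ^ 4) atTop
      (𝓝 ((Nat.factorial 5 : ℝ) / 6 ^ 4)) := by
    have h_self : Tendsto (fun n : ℕ => (n : ℝ) / n) atTop (𝓝 1) := by
      simpa using OrientedPath.tendsto_natDiv_div 1
    simpa only [one_pow, mul_one] using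
      (OrientedPath.tendsto_pow_div_choose h_self 5).div_const (6 ^ 4)
  exact tendsto_of_tendsto_of_tendsto_of_le_of_le h_lower h_upper
    (OrientedPath.le_maxDensityT3 (by norm_num) (by norm_num) (by norm_num))
    OrientedPath.maxDensityT3_five_le
end
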